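/- arXiv:0710.2898 — 2 statements merged into one kernel-verified Lean document; each statement's English description precedes it below -/
import Mathlib

section
/- Let ℋ be a complex Hilbert space, let A ∈ B(ℋ) be normal, let k be a positive integer with k ≤ dim ℋ, and let λ ∈ ℂ. Then λ ∉ Λ_k(A) if and only if A admits an orthogonal decomposition A = Ã₁ ⊕ Ã₂ such that dim Ã₁ ≤ k−1, W(Ã₁) ⊆ λ + S, and W(Ã₂) ⊆ ℂ \ (λ + S), where S = e^{it}(𝒫 ∪ L̃) for some t ∈ ℝ, with 𝒫 = {z ∈ ℂ : Im(z) > 0} and L̃ = (−∞,0] or [0,∞). -/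
noncomputable section

open scoped InnerProductSpace
open Complex

variable {H : Type*} [NormedAddCommGroup H] [InnerProductSpace ℂ H] [CompleteSpace H]

/-- `P` is an orthogonal projection: self-adjoint and idempotent. -/
def IsOrthProj (P : H →L[ℂ] H) : Prop :=
  IsSelfAdjoint P ∧ P ∘L P = P

/-- The rank of a bounded operator, as a cardinal. -/
def opRank (F : H →L[ℂ] H) : Cardinal :=
  Module.rank ℂ (LinearMap.range (F : H →ₗ[ℂ] H))

/-- The rank-`k` numerical range `Λ_k(A)`. -/
def rankKRange (k : ℕ) (A : H →L[ℂ] H) : Set ℂ :=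
  { lam | ∃ P : H →L[ℂ] H, IsOrthProj P ∧ opRank P = k ∧ P ∘L A ∘L P = lam • P }

/-- The classical numerical range `W(A)`. -/
def numRange (A : H →L[ℂ] H) : Set ℂ :=
  { z | ∃ x : H, ‖x‖ = 1 ∧ ⟪x, A x⟫_ℂ = z }

/-- `λ_k(T)`: the supremum over `k`-dimensional compressions of the `k`-th largest
eigenvalue of the compression (Courant–Fischer form: sup over `k`-dimensional
subspaces of the infimum of the Rayleigh quotient). -/
def lambdaSA (k : ℕ) (T : H →L[ℂ] H) : ℝ :=
  sSup { t : ℝ | ∃ V : Submodule ℂ H, Module.finrank ℂ V = k ∧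
    ∀ x ∈ V, ‖x‖ = 1 → t ≤ (⟪x, T x⟫_ℂ).re }

/-- The real part `(T + T*)/2` of an operator. -/
def reOp (T : H →L[ℂ] H) : H →L[ℂ] H :=
  (2 : ℂ)⁻¹ • (T + ContinuousLinearMap.adjoint T)

/-- The set `Ω_k(A)`. -/
def omegaK (k : ℕ) (A : H →L[ℂ] H) : Set ℂ :=
  { μ | ∀ ξ ∈ Set.Ico (0 : ℝ) (2 * Real.pi),
      (Complex.exp (ξ * Complex.I) * μ).re ≤ lambdaSA k (reOp (Complex.exp (ξ * Complex.I) • A)) }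

/-!
Replace `A` by the normal operator `N = A - λ`, so that `λ ∈ Λ_k(A)` means that the quadratic form
of `N` vanishes on some `k`-dimensional subspace. For every half-plane `S` (with one of its two
boundary rays), `ℋ` splits into the spectral subspaces of `N` for `S` and its complement; if one of
the former has dimension `< k`, this is the desired decomposition, and such a decomposition prevents
`λ ∈ Λ_k(A)` since every `k`-dimensional subspace contains a unit vector of the other summand.

Suppose instead that all these spectral subspaces have dimension `≥ k`. It suffices to find a
`k`-dimensional subspace on which the form of `N` is real and nonnegative: applying this to `-N` too
and merging the two subspaces gives an isotropic one. The upper and lower spectral parts of `N` are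
each diagonalised on suitable finite-dimensional subspaces, with diagonal entries `a + i`, `b - i`.
The half-plane condition lets one choose the slopes `a` large on the upper part whenever `b` is
forced to be small on the lower part, so that, pairing the vectors in reverse order, `a + b ≥ 0`;
together with a nonnegative subspace of the real part these sums span the required subspace.
-/

open scoped ComplexConjugate

section DimensionCounts

variable {K M : Type*} [DivisionRing K] [AddCommGroup M] [Module K M]

theorem exists_le_finrank_eq_of_le_rank {X : Submodule K M} {n : ℕ}
    (hn : (n : Cardinal) ≤ Module.rank K X) :
    ∃ Y ≤ X, FiniteDimensional K Y ∧ Module.finrank K Y = n := by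
  obtain ⟨s, hs, hli⟩ := le_rank_iff_exists_linearIndependent_finset.1 hn
  have hli' : LinearIndependent K fun v : s => ((v : X) : M) :=
    hli.map' X.subtype (Submodule.ker_subtype X)
  refine ⟨Submodule.span K (Set.range fun v : s => ((v : X) : M)), Submodule.span_le.2 ?_,
    FiniteDimensional.span_of_finite K (Set.finite_range _), ?_⟩
  · rintro _ ⟨v, rfl⟩
    exact (v : X).2
  · rw [finrank_span_eq_card hli', Fintype.card_coe, hs]

theorem exists_le_finrank_eq_of_le_finrank {X : Submodule K M} [FiniteDimensional K X] {n : ℕ}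
    (hn : n ≤ Module.finrank K X) :
    ∃ Y ≤ X, FiniteDimensional K Y ∧ Module.finrank K Y = n :=
  exists_le_finrank_eq_of_le_rank (by rw [← Module.finrank_eq_rank]; exact_mod_cast hn)

theorem finrank_le_finrank_inf_ker_add_one (X : Submodule K M) [FiniteDimensional K X]
    (f : M →ₗ[K] K) : Module.finrank K X ≤ Module.finrank K ↥(X ⊓ LinearMap.ker f) + 1 := by
  have hker : X ⊓ LinearMap.ker f = (LinearMap.ker (f.domRestrict X)).map X.subtype := by
    rw [LinearMap.ker_domRestrict, Submodule.map_comap_subtype]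
  have hrange : Module.finrank K (LinearMap.range (f.domRestrict X)) ≤ 1 :=
    (Submodule.finrank_le _).trans (Module.finrank_self K).le
  rw [hker, Submodule.finrank_map_subtype_eq, ← (f.domRestrict X).finrank_range_add_finrank_ker]
  omega

theorem finrank_le_finrank_map_add_add (Z : Submodule K M) [FiniteDimensional K Z]
    {f g h : M →ₗ[K] M} (hfgh : ∀ x ∈ Z, f x + g x + h x = x) :
    Module.finrank K Z ≤
      Module.finrank K (Z.map f) + Module.finrank K (Z.map g) + Module.finrank K (Z.map h) := by
  have hle : Z ≤ Z.map f ⊔ Z.map g ⊔ Z.map h := fun x hx => by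
    rw [← hfgh x hx]
    exact Submodule.add_mem_sup (Submodule.add_mem_sup (Submodule.mem_map_of_mem hx)
      (Submodule.mem_map_of_mem hx)) (Submodule.mem_map_of_mem hx)
  calc Module.finrank K Z
      ≤ Module.finrank K ↥(Z.map f ⊔ Z.map g ⊔ Z.map h) := Submodule.finrank_mono hle
    _ ≤ Module.finrank K ↥(Z.map f ⊔ Z.map g) + Module.finrank K (Z.map h) :=
        Submodule.finrank_add_le_finrank_add_finrank _ _
    _ ≤ _ := Nat.add_le_add_right (Submodule.finrank_add_le_finrank_add_finrank _ _) _

end DimensionCounts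

open scoped ComplexOrder in
theorem eq_zero_of_forall_real_mul_add_nonneg {p r : ℂ} (h : ∀ t : ℝ, 0 ≤ (t : ℂ) * p + r) :
    p = 0 := by
  have hre (t : ℝ) : 0 ≤ t * p.re + r.re := by simpa using (Complex.le_def.1 (h t)).1
  have him (t : ℝ) : t * p.im + r.im = 0 := by simpa using (Complex.le_def.1 (h t)).2.symm
  apply Complex.ext
  · by_contra hp
    have := hre (-(r.re + 1) / p.re)
    rw [div_mul_cancel₀ _ hp] at this
    linarith
  · have h₀ := him 0
    have h₁ := him 1
    simp only [Complex.zero_im]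
    linarith

section QuadraticForm

open scoped ComplexOrder

variable {E : Type*} [NormedAddCommGroup E] [InnerProductSpace ℂ E]

theorem inner_eq_zero_of_nonneg {T : E →ₗ[ℂ] E} {X : Submodule ℂ E}
    (hX : ∀ x ∈ X, 0 ≤ ⟪x, T x⟫_ℂ) {a y : E} (ha : a ∈ X) (hy : y ∈ X) (h0 : ⟪a, T a⟫_ℂ = 0) :
    ⟪a, T y⟫_ℂ = 0 ∧ ⟪y, T a⟫_ℂ = 0 := by
  have hsum : ⟪a, T y⟫_ℂ + ⟪y, T a⟫_ℂ = 0 := by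
    refine eq_zero_of_forall_real_mul_add_nonneg (r := ⟪y, T y⟫_ℂ) fun t => ?_
    convert hX _ (X.add_mem (X.smul_mem (t : ℂ) ha) hy) using 1
    simp only [map_add, map_smul, inner_add_left, inner_add_right, inner_smul_left,
      inner_smul_right, h0, Complex.conj_ofReal]
    ring
  have hdiff : I * (⟪y, T a⟫_ℂ - ⟪a, T y⟫_ℂ) = 0 := by
    refine eq_zero_of_forall_real_mul_add_nonneg (r := ⟪y, T y⟫_ℂ) fun t => ?_
    convert hX _ (X.add_mem (X.smul_mem (t * I : ℂ) ha) hy) using 1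
    simp only [map_add, map_smul, inner_add_left, inner_add_right, inner_smul_left,
      inner_smul_right, h0, map_mul, Complex.conj_ofReal, Complex.conj_I]
    ring
  have hdiff' := (mul_eq_zero.1 hdiff).resolve_left Complex.I_ne_zero
  constructor
  · linear_combination (hsum - hdiff') / 2
  · linear_combination (hsum + hdiff') / 2

theorem inner_eq_zero_of_nonpos {T : E →ₗ[ℂ] E} {Y : Submodule ℂ E}
    (hY : ∀ x ∈ Y, ⟪x, T x⟫_ℂ ≤ 0) {b y : E} (hb : b ∈ Y) (hy : y ∈ Y) (h0 : ⟪b, T b⟫_ℂ = 0) :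
    ⟪b, T y⟫_ℂ = 0 ∧ ⟪y, T b⟫_ℂ = 0 := by
  simpa using inner_eq_zero_of_nonneg (T := -T) (by simpa using hY) hb hy (by simpa using h0)

theorem inner_eq_zero_of_forall_inner_self_eq_zero {T : E →ₗ[ℂ] E} {V : Submodule ℂ E}
    (hV : ∀ x ∈ V, ⟪x, T x⟫_ℂ = 0) {x y : E} (hx : x ∈ V) (hy : y ∈ V) : ⟪x, T y⟫_ℂ = 0 :=
  (inner_eq_zero_of_nonneg (fun z hz => (hV z hz).ge) hx hy (hV x hx)).1

theorem exists_inner_real_smul_add_self_eq_zero {T : E →ₗ[ℂ] E} {a b : E}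
    (ha : 0 < ⟪a, T a⟫_ℂ) (hb : ⟪b, T b⟫_ℂ ≤ 0) (hba : ⟪b, T a⟫_ℂ = conj ⟪a, T b⟫_ℂ) :
    ∃ t : ℝ, ⟪(t : ℂ) • a + b, T ((t : ℂ) • a + b)⟫_ℂ = 0 := by
  obtain ⟨ha_re, ha_im⟩ := Complex.pos_iff.1 ha
  obtain ⟨hb_re, hb_im⟩ := Complex.nonpos_iff.1 hb
  have hdiscrim : 0 ≤ discrim (⟪a, T a⟫_ℂ).re (2 * (⟪a, T b⟫_ℂ).re) (⟪b, T b⟫_ℂ).re := by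
    rw [discrim]
    nlinarith [mul_nonneg ha_re.le (neg_nonneg.2 hb_re), sq_nonneg (⟪a, T b⟫_ℂ).re]
  obtain ⟨t, ht⟩ := exists_quadratic_eq_zero ha_re.ne' ⟨_, (Real.mul_self_sqrt hdiscrim).symm⟩
  have hexpand : ⟪(t : ℂ) • a + b, T ((t : ℂ) • a + b)⟫_ℂ =
      t * t * ⟪a, T a⟫_ℂ + t * (⟪a, T b⟫_ℂ + conj ⟪a, T b⟫_ℂ) + ⟪b, T b⟫_ℂ := by
    simp only [map_add, map_smul, inner_add_left, inner_add_right, inner_smul_left,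
      inner_smul_right, Complex.conj_ofReal, hba]
    ring
  refine ⟨t, ?_⟩
  rw [hexpand, Complex.add_conj, ← Complex.re_add_im ⟪a, T a⟫_ℂ, ← Complex.re_add_im ⟪b, T b⟫_ℂ,
    ← ha_im, hb_im]
  have ht' := congrArg Complex.ofReal ht
  push_cast at ht' ⊢
  linear_combination ht'

end QuadraticForm

section Pencil

open scoped ComplexOrder

variable {E : Type*} [NormedAddCommGroup E] [InnerProductSpace ℂ E] [FiniteDimensional ℂ E]
  {T : E →ₗ[ℂ] E} {X Y : Submodule ℂ E}

theorem exists_ne_zero_eq_smul_adjoint [Nontrivial E] (T : E →ₗ[ℂ] E) :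
    ∃ x ≠ 0, ∃ ν : ℂ, T x = ν • LinearMap.adjoint T x := by
  by_cases hT : LinearMap.ker T = ⊥
  · have hinj : Function.Injective (LinearMap.adjoint T) := by
      rw [← LinearMap.ker_eq_bot, ← LinearMap.orthogonal_range,
        LinearMap.range_eq_top.2 (LinearMap.injective_iff_surjective.1 (LinearMap.ker_eq_bot.1 hT)),
        Submodule.top_orthogonal_eq_bot]
    let e := LinearEquiv.ofInjectiveEndo _ hinj
    obtain ⟨ν, hν⟩ := Module.End.exists_eigenvalue (e.symm.toLinearMap ∘ₗ T)
    obtain ⟨x, hx⟩ := hν.exists_hasEigenvector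
    refine ⟨x, hx.2, ν, ?_⟩
    simpa [e] using congrArg e hx.apply_eq_smul
  · obtain ⟨x, hx, hx0⟩ := Submodule.exists_mem_ne_zero_of_ne_bot hT
    exact ⟨x, hx0, 0, by rwa [zero_smul]⟩

theorem inner_apply_eq_mul_of_eq_smul_adjoint {x : E} {ν : ℂ}
    (hx : T x = ν • LinearMap.adjoint T x) (y : E) : ⟪y, T x⟫_ℂ = ν * conj ⟪x, T y⟫_ℂ := by
  rw [hx, inner_smul_right, LinearMap.adjoint_inner_right, inner_conj_symm]

theorem exists_mem_ker_of_adjoint_eq_neg {G : E →ₗ[ℂ] E} (hG : LinearMap.adjoint G = -G)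
    (hXY : IsCompl X Y) (hdim : Module.finrank ℂ X = Module.finrank ℂ Y)
    (hX : ∀ x ∈ X, ⟪x, G x⟫_ℂ = 0) (hY : ∀ y ∈ Y, ⟪y, G y⟫_ℂ = 0) (hker : LinearMap.ker G ≠ ⊥) :
    ∃ y ∈ Y, y ≠ 0 ∧ G y = 0 := by
  by_contra! hYker
  have hGY : Y.map G = Yᗮ := by
    refine Submodule.eq_of_le_of_finrank_eq ?_ ?_
    · rintro _ ⟨y, hy, rfl⟩ y' hy'
      exact inner_eq_zero_of_forall_inner_self_eq_zero hY hy' hy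
    · have hinj : Function.Injective (G.domRestrict Y) := by
        rw [LinearMap.injective_domRestrict_iff, disjoint_comm, Submodule.disjoint_def']
        exact fun z hz y hy hzy => by_contra fun h => hYker y hy (hzy ▸ h) (hzy ▸ hz)
      have hmap : Module.finrank ℂ (Y.map G) = Module.finrank ℂ Y := by
        rw [← LinearMap.range_domRestrict, LinearMap.finrank_range_of_inj hinj]
      have := Y.finrank_add_finrank_orthogonal
      have := Submodule.finrank_add_eq_of_isCompl hXY
      omega
  obtain ⟨x, hx, hx0⟩ := Submodule.exists_mem_ne_zero_of_ne_bot hker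
  obtain ⟨a, ha, b, hb, rfl⟩ := Submodule.mem_sup.1 (hXY.sup_eq_top ▸ Submodule.mem_top (x := x))
  have hab : G a = -G b := eq_neg_of_add_eq_zero_left (by rwa [← map_add])
  have hGb : G b = 0 := by
    rw [← Submodule.mem_bot ℂ, ← Submodule.top_orthogonal_eq_bot, ← hXY.sup_eq_top,
      ← Submodule.inf_orthogonal, Submodule.mem_inf]
    refine ⟨fun a' ha' => ?_, fun b' hb' => inner_eq_zero_of_forall_inner_self_eq_zero hY hb' hb⟩
    rw [← neg_neg (G b), ← hab, inner_neg_right,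
      inner_eq_zero_of_forall_inner_self_eq_zero hX ha' ha, neg_zero]
  obtain rfl : b = 0 := by_contra fun h => hYker b hb h hGb
  have haY : a ∈ Y := by
    rw [← Submodule.orthogonal_orthogonal Y, ← hGY]
    rintro _ ⟨y, -, rfl⟩
    rw [← LinearMap.adjoint_inner_right, hG, LinearMap.neg_apply, hab, hGb, neg_zero, neg_zero,
      inner_zero_right]
  exact hx0 (by rw [add_zero, Submodule.disjoint_def.1 hXY.disjoint a ha haY])

theorem exists_isotropic_of_ker_sub_adjoint_ne_bot (hXY : IsCompl X Y)
    (hdim : Module.finrank ℂ X = Module.finrank ℂ Y) (hX : ∀ x ∈ X, 0 ≤ ⟪x, T x⟫_ℂ)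
    (hY : ∀ y ∈ Y, ⟪y, T y⟫_ℂ ≤ 0) (hker : LinearMap.ker (T - LinearMap.adjoint T) ≠ ⊥) :
    ∃ x ≠ 0, T x = LinearMap.adjoint T x ∧ ⟪x, T x⟫_ℂ = 0 := by
  set G := T - LinearMap.adjoint T with hGdef
  have hG : LinearMap.adjoint G = -G := by simp [hGdef]
  have hGself {x : E} (hx : (⟪x, T x⟫_ℂ).im = 0) : ⟪x, G x⟫_ℂ = 0 := by
    rw [hGdef, LinearMap.sub_apply, inner_sub_right, LinearMap.adjoint_inner_right,
      ← inner_conj_symm (T x), Complex.conj_eq_iff_im.2 hx, sub_self]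
  have hGX : ∀ x ∈ X, ⟪x, G x⟫_ℂ = 0 := fun x hx => hGself (Complex.le_def.1 (hX x hx)).2.symm
  have hGY : ∀ y ∈ Y, ⟪y, G y⟫_ℂ = 0 := fun y hy => hGself (Complex.le_def.1 (hY y hy)).2
  obtain ⟨a, haX, ha0, hGa⟩ := exists_mem_ker_of_adjoint_eq_neg hG hXY.symm hdim.symm hGY hGX hker
  obtain ⟨b, hbY, hb0, hGb⟩ := exists_mem_ker_of_adjoint_eq_neg hG hXY hdim hGX hGY hker
  by_cases haa : ⟪a, T a⟫_ℂ = 0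
  · exact ⟨a, ha0, sub_eq_zero.1 hGa, haa⟩
  have hba : ⟪b, T a⟫_ℂ = conj ⟪a, T b⟫_ℂ := by
    rw [sub_eq_zero.1 hGa, LinearMap.adjoint_inner_right, inner_conj_symm]
  obtain ⟨t, ht⟩ := exists_inner_real_smul_add_self_eq_zero
    ((hX a haX).lt_of_ne' haa) (hY b hbY) hba
  refine ⟨(t : ℂ) • a + b, fun h => hb0 ?_, ?_, ht⟩
  · refine Submodule.disjoint_def.1 hXY.disjoint b ?_ hbY
    rw [eq_neg_of_add_eq_zero_right h]
    exact X.neg_mem (X.smul_mem _ haX)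
  · rw [map_add, map_smul, map_add, map_smul, sub_eq_zero.1 hGa, sub_eq_zero.1 hGb]

theorem inner_left_eq_zero_of_inner_right_eq_zero_of_eq_smul_adjoint {a b : E} {ν : ℂ}
    (hXY : X ⊔ Y = ⊤) (hX : ∀ x ∈ X, 0 ≤ ⟪x, T x⟫_ℂ) (hY : ∀ y ∈ Y, ⟪y, T y⟫_ℂ ≤ 0)
    (ha : a ∈ X) (hb : b ∈ Y) (haa : ⟪a, T a⟫_ℂ = 0) (hbb : ⟪b, T b⟫_ℂ = 0)
    (hab : T (a + b) = ν • LinearMap.adjoint T (a + b)) {y : E} (hy : ⟪a, T y⟫_ℂ = 0) :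
    ⟪y, T a⟫_ℂ = 0 := by
  obtain ⟨a', ha', b', hb', rfl⟩ := Submodule.mem_sup.1 (hXY ▸ Submodule.mem_top (x := y))
  obtain ⟨haa', ha'a⟩ := inner_eq_zero_of_nonneg hX ha ha' haa
  obtain ⟨hbb', hb'b⟩ := inner_eq_zero_of_nonpos hY hb hb' hbb
  have hpencil := inner_apply_eq_mul_of_eq_smul_adjoint hab b'
  rw [map_add, inner_add_right, hb'b, add_zero, inner_add_left, hbb', add_zero] at hpencil
  rw [map_add, inner_add_right, haa', zero_add] at hy
  rw [inner_add_left, ha'a, hpencil, hy, map_zero, mul_zero, add_zero]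

theorem inner_self_eq_zero_of_add_eq_smul_adjoint {a b : E} {ν : ℂ} (hν : ν ≠ 1)
    (ha : 0 ≤ ⟪a, T a⟫_ℂ) (hb : ⟪b, T b⟫_ℂ ≤ 0)
    (hab : T (a + b) = ν • LinearMap.adjoint T (a + b)) (hne : ⟪a + b, T (a + b)⟫_ℂ ≠ 0) :
    ⟪a, T a⟫_ℂ = 0 ∧ ⟪b, T b⟫_ℂ = 0 := by
  have hpencil := inner_apply_eq_mul_of_eq_smul_adjoint hab
  have hνν : conj ν * ν = 1 := by
    have hnorm := congrArg norm (hpencil (a + b))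
    rw [norm_mul, Complex.norm_conj] at hnorm
    rw [Complex.conj_mul', (mul_eq_right₀ (norm_ne_zero_iff.2 hne)).1 hnorm.symm]
    norm_num
  have ha_conj : conj ⟪a, T a⟫_ℂ = ⟪a, T a⟫_ℂ :=
    Complex.conj_eq_iff_im.2 (Complex.le_def.1 ha).2.symm
  have hb_conj : conj ⟪b, T b⟫_ℂ = ⟪b, T b⟫_ℂ :=
    Complex.conj_eq_iff_im.2 (Complex.le_def.1 hb).2
  have hpa := hpencil a
  have hpb := congrArg conj (hpencil b)
  simp only [map_add, inner_add_left, inner_add_right, map_mul, Complex.conj_conj, ha_conj,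
    hb_conj] at hpa hpb
  have heq : ⟪a, T a⟫_ℂ = ⟪b, T b⟫_ℂ := by
    refine mul_left_cancel₀ (sub_ne_zero.2 hν) ?_
    linear_combination -hpa - ν * hpb - (⟪a, T b⟫_ℂ + ⟪b, T b⟫_ℂ) * hνν
  exact ⟨le_antisymm (heq ▸ hb) ha, le_antisymm hb (heq ▸ ha)⟩

theorem exists_isotropic_of_isCompl [Nontrivial E] (hXY : IsCompl X Y)
    (hdim : Module.finrank ℂ X = Module.finrank ℂ Y) (hX : ∀ x ∈ X, 0 ≤ ⟪x, T x⟫_ℂ)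
    (hY : ∀ y ∈ Y, ⟪y, T y⟫_ℂ ≤ 0) :
    ∃ x ≠ 0, ⟪x, T x⟫_ℂ = 0 ∧ ∀ y, ⟪x, T y⟫_ℂ = 0 → ⟪y, T x⟫_ℂ = 0 := by
  -- A generalised eigenvector `T x = ν T* x` satisfies the last condition. If it is not isotropic,
  -- a combination of kernel vectors of `T - T*` is (`ν = 1`), or its component in `X` is (`ν ≠ 1`).
  obtain ⟨x, hx0, ν, hx⟩ := exists_ne_zero_eq_smul_adjoint T
  have hsymm {z y : E} {μ : ℂ} (hz : T z = μ • LinearMap.adjoint T z) (h : ⟪z, T y⟫_ℂ = 0) :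
      ⟪y, T z⟫_ℂ = 0 := by
    rw [inner_apply_eq_mul_of_eq_smul_adjoint hz, h, map_zero, mul_zero]
  by_cases hxx : ⟪x, T x⟫_ℂ = 0
  · exact ⟨x, hx0, hxx, fun y => hsymm hx⟩
  by_cases hν : ν = 1
  · have hker : LinearMap.ker (T - LinearMap.adjoint T) ≠ ⊥ :=
      (Submodule.ne_bot_iff _).2 ⟨x, sub_eq_zero.2 (by rw [hx, hν, one_smul]), hx0⟩
    obtain ⟨z, hz0, hz, hzz⟩ := exists_isotropic_of_ker_sub_adjoint_ne_bot hXY hdim hX hY hker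
    exact ⟨z, hz0, hzz, fun y => hsymm (μ := 1) (by rwa [one_smul])⟩
  obtain ⟨a, ha, b, hb, rfl⟩ := Submodule.mem_sup.1 (hXY.sup_eq_top ▸ Submodule.mem_top (x := x))
  obtain ⟨haa, hbb⟩ : ⟪a, T a⟫_ℂ = 0 ∧ ⟪b, T b⟫_ℂ = 0 :=
    inner_self_eq_zero_of_add_eq_smul_adjoint hν (hX a ha) (hY b hb) hx hxx
  refine ⟨a, ?_, haa, fun y => inner_left_eq_zero_of_inner_right_eq_zero_of_eq_smul_adjoint
    hXY.sup_eq_top hX hY ha hb haa hbb hx⟩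
  rintro rfl
  exact hxx (by rwa [zero_add])

end Pencil

section IsotropicSubspace

open scoped ComplexOrder

variable {E : Type*} [NormedAddCommGroup E] [InnerProductSpace ℂ E]

/-- The compression `P_V T P_V` of `T`, as an endomorphism of the subspace `V`. -/
def compression (V : Submodule ℂ E) [V.HasOrthogonalProjection] (T : E →ₗ[ℂ] E) : V →ₗ[ℂ] V :=
  V.orthogonalProjectionOnto.toLinearMap ∘ₗ T ∘ₗ V.subtype

theorem inner_compression (V : Submodule ℂ E) [V.HasOrthogonalProjection] (T : E →ₗ[ℂ] E)
    (x y : V) : ⟪x, compression V T y⟫_ℂ = ⟪(x : E), T y⟫_ℂ :=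
  V.inner_orthogonalProjectionOnto_eq_of_mem_left x (T y)

/-- The vectors orthogonal to `x` on both sides with respect to the form `(x, y) ↦ ⟪x, T y⟫`. -/
def twoSidedOrthogonal (T : E →ₗ[ℂ] E) (x : E) : Submodule ℂ E :=
  LinearMap.ker ((innerₛₗ ℂ x) ∘ₗ T) ⊓ (ℂ ∙ T x)ᗮ

theorem mem_twoSidedOrthogonal {T : E →ₗ[ℂ] E} {x y : E} :
    y ∈ twoSidedOrthogonal T x ↔ ⟪x, T y⟫_ℂ = 0 ∧ ⟪y, T x⟫_ℂ = 0 := by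
  rw [twoSidedOrthogonal, Submodule.mem_inf, Submodule.mem_orthogonal_singleton_iff_inner_left]
  rfl

theorem twoSidedOrthogonal_neg (T : E →ₗ[ℂ] E) (x : E) :
    twoSidedOrthogonal (-T) x = twoSidedOrthogonal T x := by
  ext y
  simp [mem_twoSidedOrthogonal]

theorem inner_add_smul_self_of_mem_twoSidedOrthogonal {T : E →ₗ[ℂ] E} {x u : E}
    (hu : u ∈ twoSidedOrthogonal T x) (hxx : ⟪x, T x⟫_ℂ = 0) (c : ℂ) :
    ⟪u + c • x, T (u + c • x)⟫_ℂ = ⟪u, T u⟫_ℂ := by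
  obtain ⟨hxu, hux⟩ := mem_twoSidedOrthogonal.1 hu
  simp only [map_add, map_smul, inner_add_left, inner_add_right, inner_smul_left,
    inner_smul_right, hxu, hux, hxx, mul_zero, add_zero]

variable {T : E →ₗ[ℂ] E} {X Y : Submodule ℂ E}

theorem exists_isotropic_of_finrank_eq [FiniteDimensional ℂ X] [FiniteDimensional ℂ Y]
    (hX₀ : X ≠ ⊥) (hdim : Module.finrank ℂ X = Module.finrank ℂ Y)
    (hX : ∀ x ∈ X, 0 ≤ ⟪x, T x⟫_ℂ) (hY : ∀ y ∈ Y, ⟪y, T y⟫_ℂ ≤ 0) :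
    ∃ x ∈ X ⊔ Y, x ≠ 0 ∧ ⟪x, T x⟫_ℂ = 0 ∧ ∀ y ∈ X ⊔ Y, ⟪x, T y⟫_ℂ = 0 → ⟪y, T x⟫_ℂ = 0 := by
  by_cases hXY : X ⊓ Y = ⊥
  · have hXV : X ≤ X ⊔ Y := le_sup_left
    have hYV : Y ≤ X ⊔ Y := le_sup_right
    have hcompl : IsCompl (X.submoduleOf (X ⊔ Y)) (Y.submoduleOf (X ⊔ Y)) := by
      refine ⟨Submodule.disjoint_def.2 fun z hzX hzY => Subtype.ext ?_, codisjoint_iff.2 ?_⟩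
      · exact (Submodule.mem_bot ℂ).1 (hXY ▸ ⟨hzX, hzY⟩)
      · rw [← Submodule.submoduleOf_sup_of_le hXV hYV, Submodule.submoduleOf_self]
    have : Nontrivial ↥(X ⊔ Y) :=
      Submodule.nontrivial_iff_ne_bot.2 (ne_bot_of_le_ne_bot hX₀ hXV)
    obtain ⟨x, hx0, hxx, hx⟩ := exists_isotropic_of_isCompl (T := compression (X ⊔ Y) T) hcompl
      (by rw [(Submodule.submoduleOfEquivOfLe hXV).finrank_eq, hdim,
        (Submodule.submoduleOfEquivOfLe hYV).finrank_eq])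
      (fun x hx => by simpa only [inner_compression] using hX x hx)
      (fun y hy => by simpa only [inner_compression] using hY y hy)
    simp only [inner_compression] at hxx hx
    exact ⟨x, x.2, by simpa using hx0, hxx, fun y hy => hx ⟨y, hy⟩⟩
  · obtain ⟨x, hx, hx0⟩ := Submodule.exists_mem_ne_zero_of_ne_bot hXY
    have hxx := le_antisymm (hY x hx.2) (hX x hx.1)
    have hle : X ⊔ Y ≤ twoSidedOrthogonal T x := sup_le
      (fun y hy => mem_twoSidedOrthogonal.2 (inner_eq_zero_of_nonneg hX hx.1 hy hxx))
      (fun y hy => mem_twoSidedOrthogonal.2 (inner_eq_zero_of_nonpos hY hx.2 hy hxx))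
    exact ⟨x, Submodule.mem_sup_left hx.1, hx0, hxx,
      fun y hy _ => (mem_twoSidedOrthogonal.1 (hle hy)).2⟩

theorem finrank_le_finrank_inf_twoSidedOrthogonal_sup_span [FiniteDimensional ℂ X] {x : E}
    (hX : ∀ y ∈ X, 0 ≤ ⟪y, T y⟫_ℂ) (hxx : ⟪x, T x⟫_ℂ = 0)
    (hx : ∀ y ∈ X, ⟪x, T y⟫_ℂ = 0 → ⟪y, T x⟫_ℂ = 0) :
    Module.finrank ℂ X ≤ Module.finrank ℂ ↥(X ⊓ twoSidedOrthogonal T x ⊔ ℂ ∙ x) := by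
  by_cases hxX : x ∈ X
  · refine Submodule.finrank_mono (le_sup_of_le_left (le_inf le_rfl fun y hy => ?_))
    exact mem_twoSidedOrthogonal.2 (inner_eq_zero_of_nonneg hX hxX hy hxx)
  · have hle : X ⊓ LinearMap.ker (innerₛₗ ℂ x ∘ₗ T) ≤ X ⊓ twoSidedOrthogonal T x := fun y hy =>
      ⟨hy.1, mem_twoSidedOrthogonal.2 ⟨hy.2, hx y hy.1 hy.2⟩⟩
    have hlt : X ⊓ twoSidedOrthogonal T x < X ⊓ twoSidedOrthogonal T x ⊔ ℂ ∙ x :=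
      left_lt_sup.2 fun h => hxX (h (Submodule.mem_span_singleton_self x)).1
    calc Module.finrank ℂ X
        ≤ Module.finrank ℂ ↥(X ⊓ LinearMap.ker (innerₛₗ ℂ x ∘ₗ T)) + 1 :=
          finrank_le_finrank_inf_ker_add_one X _
      _ ≤ Module.finrank ℂ ↥(X ⊓ twoSidedOrthogonal T x) + 1 :=
          Nat.succ_le_succ (Submodule.finrank_mono hle)
      _ ≤ _ := Submodule.finrank_lt_finrank_of_lt hlt

theorem exists_nonneg_le_twoSidedOrthogonal [FiniteDimensional ℂ X] {x : E} (hx0 : x ≠ 0)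
    (hX : ∀ y ∈ X, 0 ≤ ⟪y, T y⟫_ℂ) (hxx : ⟪x, T x⟫_ℂ = 0)
    (hx : ∀ y ∈ X, ⟪x, T y⟫_ℂ = 0 → ⟪y, T x⟫_ℂ = 0) :
    ∃ X' ≤ (X ⊔ ℂ ∙ x) ⊓ (twoSidedOrthogonal T x ⊓ (ℂ ∙ x)ᗮ),
      FiniteDimensional ℂ X' ∧ Module.finrank ℂ X ≤ Module.finrank ℂ X' + 1 ∧
        ∀ y ∈ X', 0 ≤ ⟪y, T y⟫_ℂ := by
  set W := X ⊓ twoSidedOrthogonal T x ⊔ ℂ ∙ x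
  have hWx : W ≤ (X ⊔ ℂ ∙ x) ⊓ twoSidedOrthogonal T x :=
    le_inf (sup_le_sup_right inf_le_left _) (sup_le inf_le_right
      ((Submodule.span_singleton_le_iff_mem _ _).2 (mem_twoSidedOrthogonal.2 ⟨hxx, hxx⟩)))
  refine ⟨W ⊓ (ℂ ∙ x)ᗮ, ?_, inferInstance, ?_, ?_⟩
  · rw [← inf_assoc]
    exact inf_le_inf_right _ hWx
  · have hW : Module.finrank ℂ X ≤ Module.finrank ℂ W :=
      finrank_le_finrank_inf_twoSidedOrthogonal_sup_span hX hxx hx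
    have hdim : Module.finrank ℂ (ℂ ∙ x) + Module.finrank ℂ ↥(W ⊓ (ℂ ∙ x)ᗮ) =
        Module.finrank ℂ W := by
      rw [inf_comm]
      exact Submodule.finrank_add_inf_finrank_orthogonal le_sup_right
    rw [finrank_span_singleton hx0] at hdim
    omega
  · rintro y ⟨hy, -⟩
    obtain ⟨u, hu, v, hv, rfl⟩ := Submodule.mem_sup.1 hy
    obtain ⟨c, rfl⟩ := Submodule.mem_span_singleton.1 hv
    rw [inner_add_smul_self_of_mem_twoSidedOrthogonal hu.2 hxx]
    exact hX u hu.1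

theorem exists_isotropic_finrank_eq {n : ℕ} [FiniteDimensional ℂ X] [FiniteDimensional ℂ Y]
    (hX : ∀ x ∈ X, 0 ≤ ⟪x, T x⟫_ℂ) (hY : ∀ y ∈ Y, ⟪y, T y⟫_ℂ ≤ 0)
    (hnX : n ≤ Module.finrank ℂ X) (hnY : n ≤ Module.finrank ℂ Y) :
    ∃ V ≤ X ⊔ Y, FiniteDimensional ℂ V ∧ Module.finrank ℂ V = n ∧ ∀ x ∈ V, ⟪x, T x⟫_ℂ = 0 := by
  induction n generalizing X Y with
  | zero => exact ⟨⊥, bot_le, inferInstance, finrank_bot ℂ E, by simp⟩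
  | succ n ih =>
    obtain ⟨X₀, hX₀, _, hX₀n⟩ := exists_le_finrank_eq_of_le_finrank hnX
    obtain ⟨Y₀, hY₀, _, hY₀n⟩ := exists_le_finrank_eq_of_le_finrank hnY
    have hX₀_ne : X₀ ≠ ⊥ := by
      rintro rfl
      simp at hX₀n
    replace hX := fun x hx => hX x (hX₀ hx)
    replace hY := fun y hy => hY y (hY₀ hy)
    obtain ⟨x, hxV, hx0, hxx, hx⟩ :=
      exists_isotropic_of_finrank_eq hX₀_ne (hX₀n.trans hY₀n.symm) hX hY
    obtain ⟨X', hX', _, hX'n, hX'nonneg⟩ := exists_nonneg_le_twoSidedOrthogonal hx0 hX hxx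
      fun y hy => hx y (Submodule.mem_sup_left hy)
    obtain ⟨Y', hY', _, hY'n, hY'nonpos⟩ := exists_nonneg_le_twoSidedOrthogonal (T := -T) (X := Y₀)
      hx0 (by simpa using hY) (by simpa using hxx)
      (by simpa using fun y hy => hx y (Submodule.mem_sup_right hy))
    rw [twoSidedOrthogonal_neg] at hY'
    obtain ⟨V, hV, _, hVn, hV0⟩ := ih hX'nonneg (by simpa using hY'nonpos) (by omega) (by omega)
    have hxspan : ℂ ∙ x ≤ X₀ ⊔ Y₀ := (Submodule.span_singleton_le_iff_mem _ _).2 hxV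
    have hVorth : V ≤ twoSidedOrthogonal T x ⊓ (ℂ ∙ x)ᗮ :=
      hV.trans (sup_le (hX'.trans inf_le_right) (hY'.trans inf_le_right))
    have hVle : V ≤ X₀ ⊔ Y₀ := hV.trans (sup_le
      (hX'.trans (inf_le_left.trans (sup_le le_sup_left hxspan)))
      (hY'.trans (inf_le_left.trans (sup_le le_sup_right hxspan))))
    refine ⟨V ⊔ ℂ ∙ x, (sup_le hVle hxspan).trans (sup_le_sup hX₀ hY₀), inferInstance, ?_, ?_⟩
    · have hinf : V ⊓ ℂ ∙ x = ⊥ := disjoint_iff.1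
        ((ℂ ∙ x).orthogonal_disjoint.symm.mono_left (hVorth.trans inf_le_right))
      have := Submodule.finrank_sup_add_finrank_inf_eq V (ℂ ∙ x)
      rwa [hinf, finrank_bot, add_zero, hVn, finrank_span_singleton hx0] at this
    · intro y hy
      obtain ⟨u, hu, v, hv, rfl⟩ := Submodule.mem_sup.1 hy
      obtain ⟨c, rfl⟩ := Submodule.mem_span_singleton.1 hv
      rw [inner_add_smul_self_of_mem_twoSidedOrthogonal (hVorth hu).1 hxx, hV0 u hu]

end IsotropicSubspace

section SpectralSubspaces

variable {E : Type*} [NormedAddCommGroup E] [InnerProductSpace ℂ E] {u v X : H →L[ℂ] H}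

theorem apply_eq_zero_of_nonneg_of_re_inner_eq_zero (hu : 0 ≤ u) {x : H}
    (hx : (⟪x, u x⟫_ℂ).re = 0) : u x = 0 := by
  obtain ⟨s, rfl⟩ := CStarAlgebra.nonneg_iff_eq_star_mul_self.1 hu
  rw [mul_apply_eq_comp, ContinuousLinearMap.star_eq_adjoint,
    ContinuousLinearMap.adjoint_inner_right] at hx
  have hsx : ‖s x‖ ^ 2 = 0 := (inner_self_eq_norm_sq (𝕜 := ℂ) (s x)).symm.trans hx
  rw [mul_apply_eq_comp, norm_eq_zero.1 (pow_eq_zero_iff two_ne_zero |>.1 hsx), map_zero]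

theorem inner_apply_eq_of_isSelfAdjoint (hu : IsSelfAdjoint u) (x y : H) :
    ⟪x, u y⟫_ℂ = ⟪u x, y⟫_ℂ :=
  (hu.isSymmetric x y).symm

theorem starProjection_apply_comm (S : Submodule ℂ H) [S.HasOrthogonalProjection]
    (hX : ∀ x ∈ S, X x ∈ S) (hX' : ∀ x ∈ S, star X x ∈ S) (x : H) :
    S.starProjection (X x) = X (S.starProjection x) := by
  refine Submodule.eq_starProjection_of_mem_of_inner_eq_zero
    (hX _ (S.starProjection_apply_mem x)) fun w hw => ?_
  rw [← map_sub, ← ContinuousLinearMap.adjoint_inner_right]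
  exact S.starProjection_inner_eq_zero x _ (hX' w hw)

theorem mem_orthogonal_of_mem_orthogonal_inf {K S : Submodule ℂ E} [S.HasOrthogonalProjection]
    (hSK : ∀ x ∈ K, S.starProjection x ∈ K) {x : E} (hx : x ∈ K) (hxKS : x ∈ (K ⊓ S)ᗮ) :
    x ∈ Sᗮ := by
  have hPx : ⟪x, S.starProjection x⟫_ℂ = 0 :=
    inner_eq_zero_symm.1 <| hxKS _ ⟨hSK x hx, S.starProjection_apply_mem x⟩
  have hsub := S.starProjection_inner_eq_zero x _ (S.starProjection_apply_mem x)
  rwa [inner_sub_left, hPx, zero_sub, neg_eq_zero, inner_self_eq_zero,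
    S.starProjection_apply_eq_zero_iff] at hsub

/-- The spectral subspace of a self-adjoint operator `u` for the interval `(0, ∞)`, obtained as the
closure of the range of the positive part `u⁺`. -/
def posSubspace (u : H →L[ℂ] H) : Submodule ℂ H :=
  (LinearMap.ker (u⁺).toLinearMap)ᗮ

instance : (posSubspace u).HasOrthogonalProjection := by
  unfold posSubspace; infer_instance

theorem mem_orthogonal_posSubspace {x : H} : x ∈ (posSubspace u)ᗮ ↔ u⁺ x = 0 := by
  have : CompleteSpace (LinearMap.ker (u⁺).toLinearMap) := (u⁺).isClosed_ker.completeSpace_coe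
  rw [posSubspace, Submodule.orthogonal_orthogonal]
  rfl

theorem negPart_apply_eq_zero_of_mem_posSubspace {x : H} (hx : x ∈ posSubspace u) :
    u⁻ x = 0 := by
  refine ext_inner_left ℂ fun y => ?_
  rw [inner_apply_eq_of_isSelfAdjoint (CFC.negPart_nonneg u).isSelfAdjoint, inner_zero_right]
  refine hx _ (?_ : u⁺ (u⁻ y) = 0)
  rw [← mul_apply_eq_comp, CFC.posPart_mul_negPart, zero_apply]

theorem posSubspace_le_orthogonal_posSubspace_neg : posSubspace u ≤ (posSubspace (-u))ᗮ :=
  fun x hx => mem_orthogonal_posSubspace.2 <| by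
    rw [CFC.posPart_neg]; exact negPart_apply_eq_zero_of_mem_posSubspace hx

theorem posPart_apply_sub_negPart_apply (hu : IsSelfAdjoint u) (x : H) : u⁺ x - u⁻ x = u x := by
  rw [← sub_apply, CFC.posPart_sub_negPart u hu]

theorem re_inner_pos_of_mem_posSubspace (hu : IsSelfAdjoint u) {x : H} (hx : x ∈ posSubspace u)
    (h0 : x ≠ 0) : 0 < (⟪x, u x⟫_ℂ).re := by
  have hux : u x = u⁺ x := by
    rw [← posPart_apply_sub_negPart_apply hu, negPart_apply_eq_zero_of_mem_posSubspace hx, sub_zero]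
  have hpos : 0 ≤ (⟪x, u⁺ x⟫_ℂ).re := (ContinuousLinearMap.nonneg_iff_isPositive _ |>.1
    (CFC.posPart_nonneg u)).re_inner_nonneg_right x
  rw [hux]
  refine hpos.lt_of_ne fun h => h0 ?_
  exact inner_self_eq_zero.1 <| hx x <|
    apply_eq_zero_of_nonneg_of_re_inner_eq_zero (CFC.posPart_nonneg u) h.symm

theorem re_inner_nonpos_of_mem_orthogonal_posSubspace (hu : IsSelfAdjoint u) {x : H}
    (hx : x ∈ (posSubspace u)ᗮ) : (⟪x, u x⟫_ℂ).re ≤ 0 := by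
  rw [← posPart_apply_sub_negPart_apply hu, mem_orthogonal_posSubspace.1 hx, zero_sub,
    inner_neg_right, neg_re, neg_nonpos]
  exact (ContinuousLinearMap.nonneg_iff_isPositive _ |>.1
    (CFC.negPart_nonneg u)).re_inner_nonneg_right x

theorem apply_eq_zero_of_mem_orthogonal_posSubspace (hu : IsSelfAdjoint u) {x : H}
    (hx : x ∈ (posSubspace u)ᗮ) (h0 : (⟪x, u x⟫_ℂ).re = 0) : u x = 0 := by
  have hux : u x = -u⁻ x := by
    rw [← posPart_apply_sub_negPart_apply hu, mem_orthogonal_posSubspace.1 hx, zero_sub]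
  rw [hux, inner_neg_right, neg_re, neg_eq_zero] at h0
  rw [hux, apply_eq_zero_of_nonneg_of_re_inner_eq_zero (CFC.negPart_nonneg u) h0, neg_zero]

theorem ker_le_orthogonal_posSubspace (hu : IsSelfAdjoint u) :
    LinearMap.ker u.toLinearMap ≤ (posSubspace u)ᗮ := fun x (hx : u x = 0) => by
  have hx' : u⁺ x = u⁻ x := by rw [← sub_eq_zero, posPart_apply_sub_negPart_apply hu, hx]
  rw [mem_orthogonal_posSubspace, ← inner_self_eq_zero (𝕜 := ℂ),
    ← inner_apply_eq_of_isSelfAdjoint (CFC.posPart_nonneg u).isSelfAdjoint, hx',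
    ← mul_apply_eq_comp, CFC.posPart_mul_negPart, zero_apply, inner_zero_right]

theorem commute_posPart (h : Commute u X) : Commute u⁺ X := by
  rw [CFC.posPart_def]
  exact h.cfcₙ_real _

theorem commute_star_of_isSelfAdjoint (hu : IsSelfAdjoint u) (h : Commute u X) :
    Commute u (star X) :=
  hu.star_eq ▸ h.star_star

theorem apply_mem_posSubspace_of_commute (hu : IsSelfAdjoint u) (h : Commute u X) {x : H}
    (hx : x ∈ posSubspace u) : X x ∈ posSubspace u := by
  intro y (hy : u⁺ y = 0)
  rw [← ContinuousLinearMap.adjoint_inner_left]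
  refine hx _ (?_ : u⁺ (star X y) = 0)
  have hcomm : Commute u⁺ (star X) := commute_posPart (commute_star_of_isSelfAdjoint hu h)
  rw [← mul_apply_eq_comp, hcomm.eq, mul_apply_eq_comp, hy, map_zero]

theorem starProjection_posSubspace_apply_comm (hu : IsSelfAdjoint u) (h : Commute u X) (x : H) :
    (posSubspace u).starProjection (X x) = X ((posSubspace u).starProjection x) :=
  starProjection_apply_comm _ (fun _ => apply_mem_posSubspace_of_commute hu h)
    (fun _ => apply_mem_posSubspace_of_commute hu (commute_star_of_isSelfAdjoint hu h)) x

theorem apply_mem_ker_of_commute {S T : E →L[ℂ] E} (h : Commute S T) {x : E}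
    (hx : x ∈ LinearMap.ker S.toLinearMap) : T x ∈ LinearMap.ker S.toLinearMap := by
  rw [LinearMap.mem_ker, ContinuousLinearMap.coe_coe] at hx ⊢
  rw [← mul_apply_eq_comp, h.eq, mul_apply_eq_comp, hx, map_zero]

theorem apply_mem_orthogonal_of_star {S : Submodule ℂ H} (hS : ∀ x ∈ S, star X x ∈ S) {x : H}
    (hx : x ∈ Sᗮ) : X x ∈ Sᗮ := fun y hy => by
  rw [← ContinuousLinearMap.adjoint_inner_left]
  exact hx _ (hS y hy)

/-- For commuting self-adjoint operators `u` and `v`, the spectral subspace on which the pair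
`(u, v)` is nonnegative in the lexicographic order. It is encoded as the orthogonal complement of
the spectral subspace for `u < 0` together with the one for `u = 0`, `v < 0`. -/
def lexNonnegSubspace (u v : H →L[ℂ] H) : Submodule ℂ H :=
  (posSubspace (-u) ⊔ LinearMap.ker u.toLinearMap ⊓ posSubspace (-v))ᗮ

instance : (lexNonnegSubspace u v).HasOrthogonalProjection := by
  unfold lexNonnegSubspace; infer_instance

theorem apply_mem_lexNonnegSubspace_of_commute (hu : IsSelfAdjoint u) (hv : IsSelfAdjoint v)
    (huX : Commute u X) (hvX : Commute v X) {x : H} (hx : x ∈ lexNonnegSubspace u v) :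
    X x ∈ lexNonnegSubspace u v := by
  have huX' := commute_star_of_isSelfAdjoint hu huX
  have hvX' := commute_star_of_isSelfAdjoint hv hvX
  rw [lexNonnegSubspace, ← Submodule.inf_orthogonal] at hx ⊢
  exact ⟨apply_mem_orthogonal_of_star
      (fun _ => apply_mem_posSubspace_of_commute hu.neg huX'.neg_left) hx.1,
    apply_mem_orthogonal_of_star (fun _ hy => Submodule.mem_inf.2
      ⟨apply_mem_ker_of_commute huX' hy.1,
        apply_mem_posSubspace_of_commute hv.neg hvX'.neg_left hy.2⟩) hx.2⟩

theorem starProjection_posSubspace_neg_apply_mem_ker (hv : IsSelfAdjoint v) (huv : Commute u v)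
    {x : H} (hx : x ∈ LinearMap.ker u.toLinearMap) :
    (posSubspace (-v)).starProjection x ∈ LinearMap.ker u.toLinearMap := by
  rw [LinearMap.mem_ker, ContinuousLinearMap.coe_coe] at hx ⊢
  rw [← starProjection_posSubspace_apply_comm hv.neg huv.symm.neg_left, hx, map_zero]

theorem lex_nonneg_of_mem_lexNonnegSubspace (hu : IsSelfAdjoint u) (hv : IsSelfAdjoint v)
    (huv : Commute u v) {x : H} (hx : x ∈ lexNonnegSubspace u v) :
    0 < (⟪x, u x⟫_ℂ).re ∨ (⟪x, u x⟫_ℂ).re = 0 ∧ 0 ≤ (⟪x, v x⟫_ℂ).re := by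
  rw [lexNonnegSubspace, ← Submodule.inf_orthogonal] at hx
  have hnonneg := re_inner_nonpos_of_mem_orthogonal_posSubspace hu.neg hx.1
  rw [neg_apply, inner_neg_right, neg_re, neg_nonpos] at hnonneg
  refine hnonneg.lt_or_eq.imp_right fun h => ⟨h.symm, ?_⟩
  have hker : -u x = 0 := apply_eq_zero_of_mem_orthogonal_posSubspace hu.neg hx.1 <| by
    rw [neg_apply, inner_neg_right, neg_re, ← h, neg_zero]
  have hxv := re_inner_nonpos_of_mem_orthogonal_posSubspace hv.neg <|
    mem_orthogonal_of_mem_orthogonal_inf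
      (fun _ => starProjection_posSubspace_neg_apply_mem_ker hv huv) (neg_eq_zero.1 hker) hx.2
  rwa [neg_apply, inner_neg_right, neg_re, neg_nonpos] at hxv

theorem posSubspace_le_lexNonnegSubspace (hu : IsSelfAdjoint u) :
    posSubspace u ≤ lexNonnegSubspace u v := by
  rw [lexNonnegSubspace, ← Submodule.inf_orthogonal]
  refine le_inf posSubspace_le_orthogonal_posSubspace_neg ?_
  exact (Submodule.isOrtho_iff_le.2 <| inf_le_left.trans (ker_le_orthogonal_posSubspace hu)).symm

theorem ker_inf_orthogonal_le_lexNonnegSubspace (hu : IsSelfAdjoint u) :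
    LinearMap.ker u.toLinearMap ⊓ (posSubspace (-v))ᗮ ≤ lexNonnegSubspace u v := by
  rw [lexNonnegSubspace, ← Submodule.inf_orthogonal]
  refine inf_le_inf (fun x hx => ker_le_orthogonal_posSubspace hu.neg ?_)
    (Submodule.orthogonal_le inf_le_right)
  simpa using hx

theorem lex_neg_of_mem_orthogonal_lexNonnegSubspace (hu : IsSelfAdjoint u) (hv : IsSelfAdjoint v)
    (huv : Commute u v) {x : H} (hx : x ∈ (lexNonnegSubspace u v)ᗮ) (h0 : x ≠ 0) :
    (⟪x, u x⟫_ℂ).re < 0 ∨ (⟪x, u x⟫_ℂ).re = 0 ∧ (⟪x, v x⟫_ℂ).re < 0 := by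
  have hxu : x ∈ (posSubspace u)ᗮ :=
    Submodule.orthogonal_le (posSubspace_le_lexNonnegSubspace hu) hx
  refine (re_inner_nonpos_of_mem_orthogonal_posSubspace hu hxu).lt_or_eq.imp_right
    fun h => ⟨h, ?_⟩
  have hker : u x = 0 := apply_eq_zero_of_mem_orthogonal_posSubspace hu hxu h
  have hxv : x ∈ (posSubspace (-v))ᗮᗮ := by
    refine mem_orthogonal_of_mem_orthogonal_inf (fun y hy => ?_) hker
      (Submodule.orthogonal_le (ker_inf_orthogonal_le_lexNonnegSubspace hu) hx)
    rw [Submodule.starProjection_orthogonal_val]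
    exact sub_mem hy (starProjection_posSubspace_neg_apply_mem_ker hv huv hy)
  rw [Submodule.orthogonal_orthogonal] at hxv
  have hpos := re_inner_pos_of_mem_posSubspace hv.neg hxv h0
  rwa [neg_apply, inner_neg_right, neg_re, neg_pos] at hpos

end SpectralSubspaces

section HalfPlanes

open scoped ComplexStarModule

variable {N : H →L[ℂ] H} {ω : ℂ} {ε : ℝ}

theorem re_inner_realPart_apply (T : H →L[ℂ] H) (x : H) :
    (⟪x, (ℜ T : H →L[ℂ] H) x⟫_ℂ).re = (⟪x, T x⟫_ℂ).re := by
  have hstar : (⟪x, star T x⟫_ℂ).re = (⟪x, T x⟫_ℂ).re := by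
    rw [ContinuousLinearMap.star_eq_adjoint, ContinuousLinearMap.adjoint_inner_right,
      ← inner_conj_symm, conj_re]
  rw [realPart_apply_coe, smul_apply, add_apply, inner_smul_right_eq_smul, inner_add_right,
    real_smul, re_ofReal_mul, add_re, hstar]
  ring

theorem re_inner_imaginaryPart_apply (T : H →L[ℂ] H) (x : H) :
    (⟪x, (ℑ T : H →L[ℂ] H) x⟫_ℂ).re = (⟪x, T x⟫_ℂ).im := by
  have h := re_inner_realPart_apply (I • T) x
  rw [realPart_I_smul, AddSubgroup.coe_neg, neg_apply, inner_neg_right, smul_apply,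
    inner_smul_right, I_mul_re, neg_re] at h
  exact neg_inj.1 h

theorem realPart_apply_add_I_smul_imaginaryPart_apply (C : H →L[ℂ] H) (x : H) :
    (ℜ C : H →L[ℂ] H) x + I • (ℑ C : H →L[ℂ] H) x = C x := by
  rw [← smul_apply, ← add_apply, realPart_add_I_smul_imaginaryPart]

/-- The half-plane `ω⁻¹ (𝒫 ∪ L)`, where `𝒫` is the open upper half-plane and the boundary ray `L`
is `[0, ∞)` if `ε = 1` and `(-∞, 0]` if `ε = -1`. -/
def halfPlane (ω : ℂ) (ε : ℝ) : Set ℂ :=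
  {z | 0 < (ω * z).im ∨ (ω * z).im = 0 ∧ 0 ≤ ε * (ω * z).re}

/-- The spectral subspace of a normal operator `N` for the half-plane `halfPlane ω ε`. -/
def halfPlaneSubspace (N : H →L[ℂ] H) (ω : ℂ) (ε : ℝ) : Submodule ℂ H :=
  lexNonnegSubspace (ℑ (ω • N) : H →L[ℂ] H) (ε • (ℜ (ω • N) : H →L[ℂ] H))

instance : (halfPlaneSubspace N ω ε).HasOrthogonalProjection := by
  unfold halfPlaneSubspace; infer_instance

theorem isClosed_halfPlaneSubspace : IsClosed (halfPlaneSubspace N ω ε : Set H) :=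
  Submodule.isClosed_orthogonal _

theorem isSelfAdjoint_smul_realPart (T : H →L[ℂ] H) : IsSelfAdjoint (ε • (ℜ T : H →L[ℂ] H)) :=
  (IsSelfAdjoint.all ε).smul (ℜ T).2

theorem commute_imaginaryPart_smul_realPart (T : H →L[ℂ] H) [IsStarNormal T] :
    Commute (ℑ T : H →L[ℂ] H) (ε • (ℜ T : H →L[ℂ] H)) :=
  (Commute.realPart_imaginaryPart T).symm.smul_right ε

theorem commute_realPart_smul {X : H →L[ℂ] H} (h : Commute N X) (h' : Commute (star N) X) :
    Commute (ℜ (ω • N) : H →L[ℂ] H) X := by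
  rw [realPart_apply_coe, star_smul]
  exact ((h.smul_left _).add_left (h'.smul_left _)).smul_left _

theorem commute_imaginaryPart_smul {X : H →L[ℂ] H} (h : Commute N X) (h' : Commute (star N) X) :
    Commute (ℑ (ω • N) : H →L[ℂ] H) X := by
  rw [imaginaryPart_apply_coe, star_smul]
  exact (((h.smul_left _).sub_left (h'.smul_left _)).smul_left _).smul_left _

theorem apply_mem_halfPlaneSubspace_of_commute {X : H →L[ℂ] H} (h : Commute N X)
    (h' : Commute (star N) X) {x : H} (hx : x ∈ halfPlaneSubspace N ω ε) :
    X x ∈ halfPlaneSubspace N ω ε :=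
  apply_mem_lexNonnegSubspace_of_commute (ℑ (ω • N)).2 (isSelfAdjoint_smul_realPart _)
    (commute_imaginaryPart_smul h h') ((commute_realPart_smul h h').smul_left ε) hx

theorem inner_mem_halfPlane_of_mem_halfPlaneSubspace [IsStarNormal N] {x : H}
    (hx : x ∈ halfPlaneSubspace N ω ε) : ⟪x, N x⟫_ℂ ∈ halfPlane ω ε := by
  have h := lex_nonneg_of_mem_lexNonnegSubspace (ℑ (ω • N)).2 (isSelfAdjoint_smul_realPart _)
    (commute_imaginaryPart_smul_realPart _) hx
  rwa [smul_apply, inner_smul_right_eq_smul, smul_re, smul_eq_mul,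
    re_inner_imaginaryPart_apply, re_inner_realPart_apply, smul_apply, inner_smul_right] at h

theorem inner_notMem_halfPlane_of_mem_orthogonal_halfPlaneSubspace [IsStarNormal N] {x : H}
    (hx : x ∈ (halfPlaneSubspace N ω ε)ᗮ) (h0 : x ≠ 0) : ⟪x, N x⟫_ℂ ∉ halfPlane ω ε := by
  have h := lex_neg_of_mem_orthogonal_lexNonnegSubspace (ℑ (ω • N)).2
    (isSelfAdjoint_smul_realPart _) (commute_imaginaryPart_smul_realPart _) hx h0
  rw [smul_apply, inner_smul_right_eq_smul, smul_re, smul_eq_mul,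
    re_inner_imaginaryPart_apply, re_inner_realPart_apply, smul_apply, inner_smul_right] at h
  rintro (h1 | ⟨h1, h2⟩) <;> rcases h with h3 | ⟨h3, h4⟩ <;> linarith

theorem exp_neg_mul_eq_inv_norm_smul_mul (hω : ω ≠ 0) (z : ℂ) :
    exp (-((-ω.arg : ℝ) : ℂ) * I) * z = ‖ω‖⁻¹ • (ω * z) := by
  have hr : (‖ω‖ : ℂ) ≠ 0 := ofReal_ne_zero.2 (norm_ne_zero_iff.2 hω)
  nth_rw 3 [← norm_mul_exp_arg_mul_I ω]
  rw [ofReal_neg, neg_neg, real_smul, ofReal_inv, mul_assoc, inv_mul_cancel_left₀ hr]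

theorem mem_ofReal_image_iff {L : Set ℝ} {z : ℂ} : z ∈ ofReal '' L ↔ z.im = 0 ∧ z.re ∈ L := by
  constructor
  · rintro ⟨s, hs, rfl⟩
    exact ⟨ofReal_im s, hs⟩
  · rintro ⟨him, hre⟩
    exact ⟨z.re, hre, Complex.ext rfl him.symm⟩

theorem exists_mem_halfPlane_iff (hω : ω ≠ 0) (hε : ε = 1 ∨ ε = -1) :
    ∃ (t : ℝ) (L : Set ℝ), (L = Set.Iic 0 ∨ L = Set.Ici 0) ∧ ∀ z : ℂ,
      z ∈ halfPlane ω ε ↔ exp (-(t : ℂ) * I) * z ∈ {w : ℂ | 0 < w.im} ∪ (ofReal '' L) := by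
  have hr : 0 < ‖ω‖⁻¹ := inv_pos.2 (norm_pos_iff.2 hω)
  refine ⟨-ω.arg, {s | 0 ≤ ε * s}, ?_, fun z => ?_⟩
  · rcases hε with rfl | rfl
    · right; ext; simp
    · left; ext; simp
  · rw [exp_neg_mul_eq_inv_norm_smul_mul hω, Set.mem_union, mem_ofReal_image_iff, Set.mem_ofPred_eq,
      Set.mem_ofPred_eq, smul_re, smul_im, smul_eq_mul, smul_eq_mul, mul_left_comm,
      mul_pos_iff_of_pos_left hr, mul_nonneg_iff_of_pos_left hr, mul_eq_zero, or_iff_right hr.ne']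
    rfl

end HalfPlanes

section Diagonalization

open scoped ComplexStarModule

variable {E : Type*} [NormedAddCommGroup E] [InnerProductSpace ℂ E] [FiniteDimensional ℂ E]
  {T : E →ₗ[ℂ] E} {n : ℕ}

theorem exists_ne_zero_eigenvectorBasis_repr_eq_zero_of_lt (hT : T.IsSymmetric)
    (hn : Module.finrank ℂ E = n) {Y : Submodule ℂ E} {i : Fin n} (hY : i < Module.finrank ℂ Y) :
    ∃ y ∈ Y, y ≠ 0 ∧ ∀ j < i, (hT.eigenvectorBasis hn).repr y j = 0 := by
  let coords : Y →ₗ[ℂ] (Fin i → ℂ) := LinearMap.pi fun j =>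
    ((hT.eigenvectorBasis hn).toBasis.coord (j.castLE i.2.le)).domRestrict Y
  have hker : LinearMap.ker coords ≠ ⊥ :=
    LinearMap.ker_ne_bot_of_finrank_lt (by rwa [Module.finrank_fin_fun])
  obtain ⟨y, hy, h0⟩ := Submodule.exists_mem_ne_zero_of_ne_bot hker
  exact ⟨y, y.2, by simpa using h0, fun j hj => congrFun hy ⟨j, hj⟩⟩

theorem re_inner_apply_self_eq_sum_eigenvalues (hT : T.IsSymmetric)
    (hn : Module.finrank ℂ E = n) (y : E) :
    (⟪y, T y⟫_ℂ).re =
      ∑ j, hT.eigenvalues hn j * ‖(hT.eigenvectorBasis hn).repr y j‖ ^ 2 := by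
  rw [← (hT.eigenvectorBasis hn).repr.inner_map_map, PiLp.inner_apply, re_sum]
  refine Finset.sum_congr rfl fun j _ => ?_
  rw [hT.eigenvectorBasis_apply_self_apply, ← smul_eq_mul, inner_smul_right,
    inner_self_eq_norm_sq_to_K]
  exact_mod_cast ofReal_re _

theorem le_eigenvalues_of_forall_mul_norm_sq_le (hT : T.IsSymmetric)
    (hn : Module.finrank ℂ E = n) {Y : Submodule ℂ E} {i : Fin n} (hY : i < Module.finrank ℂ Y)
    {s : ℝ} (hs : ∀ y ∈ Y, s * ‖y‖ ^ 2 ≤ (⟪y, T y⟫_ℂ).re) : s ≤ hT.eigenvalues hn i := by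
  obtain ⟨y, hyY, h0, hy⟩ := exists_ne_zero_eigenvectorBasis_repr_eq_zero_of_lt hT hn hY
  refine le_of_mul_le_mul_right ((hs y hyY).trans ?_) (pow_pos (norm_pos_iff.2 h0) 2)
  rw [re_inner_apply_self_eq_sum_eigenvalues hT hn, ← (hT.eigenvectorBasis hn).repr.norm_map,
    EuclideanSpace.norm_sq_eq, Finset.mul_sum]
  refine Finset.sum_le_sum fun j _ => ?_
  rcases lt_or_ge j i with hji | hij
  · rw [hy j hji, norm_zero, zero_pow two_ne_zero, mul_zero, mul_zero]
  · exact mul_le_mul_of_nonneg_right (hT.eigenvalues_antitone hn hij) (sq_nonneg _)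

theorem imaginaryPart_nonneg {C : H →L[ℂ] H} (hC : ∀ x, x ≠ 0 → 0 < (⟪x, C x⟫_ℂ).im) :
    0 ≤ (ℑ C : H →L[ℂ] H) := by
  refine (ContinuousLinearMap.nonneg_iff_isPositive _).2
    (ContinuousLinearMap.isPositive_def'.2 ⟨(ℑ C).2, fun x => ?_⟩)
  rw [ContinuousLinearMap.reApplyInnerSelf_apply, inner_re_symm]
  refine le_of_le_of_eq ?_ (re_inner_imaginaryPart_apply C x).symm
  rcases eq_or_ne x 0 with rfl | hx
  · rw [inner_zero_left, zero_im]
  · exact (hC x hx).le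

theorem exists_linearEquiv_inner_eq_inner_imaginaryPart [CompleteSpace E] {C : E →L[ℂ] E}
    (hC : ∀ x, x ≠ 0 → 0 < (⟪x, C x⟫_ℂ).im) :
    ∃ R : E ≃ₗ[ℂ] E, ∀ x y, ⟪R x, R y⟫_ℂ = ⟪x, (ℑ C : E →L[ℂ] E) y⟫_ℂ := by
  obtain ⟨R, hR⟩ := CStarAlgebra.nonneg_iff_eq_star_mul_self.1 (imaginaryPart_nonneg hC)
  have hinner (x y : E) : ⟪R x, R y⟫_ℂ = ⟪x, (ℑ C : E →L[ℂ] E) y⟫_ℂ := by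
    rw [hR, mul_apply_eq_comp, ContinuousLinearMap.star_eq_adjoint,
      ContinuousLinearMap.adjoint_inner_right]
  have hinj : Function.Injective R.toLinearMap := by
    refine (injective_iff_map_eq_zero _).2 fun x hx => not_not.1 fun h0 => (hC x h0).ne' ?_
    have hRx : R x = 0 := hx
    rw [← re_inner_imaginaryPart_apply, ← hinner, hRx, inner_zero_left, zero_re]
  exact ⟨LinearEquiv.ofInjectiveEndo R.toLinearMap hinj, hinner⟩

theorem exists_isSymmetric_inner_eq_inner_add_I_smul [CompleteSpace E] {C : E →L[ℂ] E}
    (hC : ∀ x, x ≠ 0 → 0 < (⟪x, C x⟫_ℂ).im) :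
    ∃ (R : E ≃ₗ[ℂ] E) (S : E →ₗ[ℂ] E), S.IsSymmetric ∧
      ∀ x y, ⟪x, C y⟫_ℂ = ⟪R x, S (R y) + I • R y⟫_ℂ := by
  obtain ⟨R, hR⟩ := exists_linearEquiv_inner_eq_inner_imaginaryPart hC
  have hsymm := (ContinuousLinearMap.isSelfAdjoint_iff_isSymmetric.1 (ℜ C).2)
  refine ⟨R, LinearMap.adjoint R.symm.toLinearMap ∘ₗ (ℜ C).1.toLinearMap ∘ₗ R.symm.toLinearMap,
    hsymm.adjoint_conj _, fun x y => ?_⟩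
  rw [inner_add_right, inner_smul_right, hR, LinearMap.comp_apply, LinearMap.comp_apply,
    LinearMap.adjoint_inner_right, LinearEquiv.coe_coe, R.symm_apply_apply, R.symm_apply_apply,
    ← inner_smul_right, ContinuousLinearMap.coe_coe, ← inner_add_right,
    realPart_apply_add_I_smul_imaginaryPart_apply]

theorem exists_diagonal_of_forall_im_pos (hT : ∀ x, x ≠ 0 → 0 < (⟪x, T x⟫_ℂ).im)
    (hn : Module.finrank ℂ E = n) :
    ∃ (e : Fin n → E) (a : Fin n → ℝ),
      (∀ i j, ⟪e i, T (e j)⟫_ℂ = if i = j then (a i : ℂ) + I else 0) ∧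
      ∀ (i : Fin n) (s : ℝ) (Y : Submodule ℂ E), i < Module.finrank ℂ Y →
        (∀ y ∈ Y, s * (⟪y, T y⟫_ℂ).im ≤ (⟪y, T y⟫_ℂ).re) → s ≤ a i := by
  have := FiniteDimensional.complete ℂ E
  obtain ⟨R, S, hS, hRS⟩ :=
    exists_isSymmetric_inner_eq_inner_add_I_smul (C := T.toContinuousLinearMap) hT
  replace hRS : ∀ x y, ⟪x, T y⟫_ℂ = ⟪R x, S (R y) + I • R y⟫_ℂ := hRS
  refine ⟨fun i => R.symm (hS.eigenvectorBasis hn i), hS.eigenvalues hn, fun i j => ?_,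
    fun i s Y hY hs => ?_⟩
  · rw [hRS, R.apply_symm_apply, R.apply_symm_apply, hS.apply_eigenvectorBasis, ← add_smul,
      inner_smul_right, OrthonormalBasis.inner_eq_ite]
    split_ifs with h
    · rw [h, mul_one]
      rfl
    · exact mul_zero _
  · refine le_eigenvalues_of_forall_mul_norm_sq_le hS hn (Y := Y.map R.toLinearMap)
      (by rwa [LinearEquiv.finrank_map_eq]) ?_
    rintro _ ⟨y, hy, rfl⟩
    have hform : ⟪y, T y⟫_ℂ = ⟪R y, S (R y)⟫_ℂ + I * (‖R y‖ ^ 2 : ℝ) := by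
      rw [hRS, inner_add_right, inner_smul_right, inner_self_eq_norm_sq_to_K]
      norm_cast
    have him : (⟪R y, S (R y)⟫_ℂ).im = 0 := hS.im_inner_self_apply (R y)
    have h := hs y hy
    rw [hform, add_im, add_re, him, re_mul_ofReal, im_mul_ofReal, I_re, I_im, zero_mul, one_mul,
      zero_add, add_zero] at h
    exact h

end Diagonalization

section UpperSubspace

open scoped ComplexStarModule

variable {N X : H →L[ℂ] H} {x : H}

/-- The spectral subspace of a normal operator for the open upper half-plane. -/
def upperSubspace (N : H →L[ℂ] H) : Submodule ℂ H :=
  posSubspace (ℑ N : H →L[ℂ] H)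

instance : (upperSubspace N).HasOrthogonalProjection := by
  unfold upperSubspace; infer_instance

/-- The spectral subspace of a normal operator for the real line. -/
def realSubspace (N : H →L[ℂ] H) : Submodule ℂ H :=
  LinearMap.ker (ℑ N : H →L[ℂ] H).toLinearMap

theorem imaginaryPart_star (N : H →L[ℂ] H) :
    (ℑ (star N) : H →L[ℂ] H) = -(ℑ N : H →L[ℂ] H) := by
  rw [imaginaryPart_apply_coe, imaginaryPart_apply_coe, star_star, ← neg_sub N, smul_neg, smul_neg]

theorem realSubspace_star (N : H →L[ℂ] H) : realSubspace (star N) = realSubspace N := by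
  ext x
  rw [realSubspace, imaginaryPart_star, realSubspace, LinearMap.mem_ker, LinearMap.mem_ker,
    ContinuousLinearMap.coe_coe, ContinuousLinearMap.coe_coe, neg_apply, neg_eq_zero]

theorem inner_star_apply_self (N : H →L[ℂ] H) (x : H) :
    ⟪x, star N x⟫_ℂ = conj ⟪x, N x⟫_ℂ := by
  rw [ContinuousLinearMap.star_eq_adjoint, ContinuousLinearMap.adjoint_inner_right, inner_conj_symm]

theorem im_inner_pos_of_mem_upperSubspace (hx : x ∈ upperSubspace N) (h0 : x ≠ 0) :
    0 < (⟪x, N x⟫_ℂ).im := by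
  rw [← re_inner_imaginaryPart_apply]
  exact re_inner_pos_of_mem_posSubspace (ℑ N).2 hx h0

theorem im_inner_eq_zero_of_mem_realSubspace (hx : x ∈ realSubspace N) : (⟪x, N x⟫_ℂ).im = 0 := by
  have hNx : (ℑ N : H →L[ℂ] H) x = 0 := hx
  rw [← re_inner_imaginaryPart_apply, hNx, inner_zero_right, zero_re]

theorem isOrtho_upperSubspace_star : upperSubspace N ⟂ upperSubspace (star N) := by
  rw [Submodule.isOrtho_iff_le, upperSubspace, upperSubspace, imaginaryPart_star]
  exact posSubspace_le_orthogonal_posSubspace_neg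

theorem isOrtho_realSubspace_upperSubspace : realSubspace N ⟂ upperSubspace N :=
  Submodule.isOrtho_iff_le.2 (ker_le_orthogonal_posSubspace (ℑ N).2)

theorem commute_imaginaryPart (h : Commute N X) (h' : Commute (star N) X) :
    Commute (ℑ N : H →L[ℂ] H) X := by
  simpa only [one_smul] using commute_imaginaryPart_smul (ω := 1) h h'

theorem apply_mem_upperSubspace_of_commute (h : Commute N X) (h' : Commute (star N) X)
    (hx : x ∈ upperSubspace N) : X x ∈ upperSubspace N :=
  apply_mem_posSubspace_of_commute (ℑ N).2 (commute_imaginaryPart h h') hx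

theorem apply_mem_realSubspace_of_commute (h : Commute N X) (h' : Commute (star N) X)
    (hx : x ∈ realSubspace N) : X x ∈ realSubspace N :=
  apply_mem_ker_of_commute (commute_imaginaryPart h h') hx

theorem apply_mem_upperSubspace [IsStarNormal N] (hx : x ∈ upperSubspace N) :
    N x ∈ upperSubspace N :=
  apply_mem_upperSubspace_of_commute (Commute.refl N) (star_comm_self' N) hx

theorem apply_mem_upperSubspace_star [IsStarNormal N] (hx : x ∈ upperSubspace (star N)) :
    N x ∈ upperSubspace (star N) :=
  apply_mem_upperSubspace_of_commute (star_comm_self' N) ((star_star N).symm ▸ Commute.refl N) hx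

theorem apply_mem_realSubspace [IsStarNormal N] (hx : x ∈ realSubspace N) :
    N x ∈ realSubspace N :=
  apply_mem_realSubspace_of_commute (Commute.refl N) (star_comm_self' N) hx

theorem commute_starProjection_upperSubspace (h : Commute N X) (h' : Commute (star N) X) :
    Commute X (upperSubspace N).starProjection :=
  ContinuousLinearMap.ext fun x =>
    (starProjection_posSubspace_apply_comm (ℑ N).2 (commute_imaginaryPart h h') x).symm

theorem sub_starProjection_sub_starProjection_mem_realSubspace (N : H →L[ℂ] H) (x : H) :
    x - (upperSubspace N).starProjection x - (upperSubspace (star N)).starProjection x ∈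
      realSubspace N := by
  set y := x - (upperSubspace N).starProjection x - (upperSubspace (star N)).starProjection x
    with hy
  have hupper : y ∈ (upperSubspace N)ᗮ :=
    sub_mem (Submodule.sub_starProjection_mem_orthogonal x)
      (isOrtho_upperSubspace_star.symm (Submodule.starProjection_apply_mem _ x))
  have hlower : y ∈ (upperSubspace (star N))ᗮ := by
    rw [hy, sub_right_comm]
    exact sub_mem (Submodule.sub_starProjection_mem_orthogonal x)
      (isOrtho_upperSubspace_star (Submodule.starProjection_apply_mem _ x))
  rw [upperSubspace, imaginaryPart_star] at hlower
  refine apply_eq_zero_of_mem_orthogonal_posSubspace (ℑ N).2 hupper (le_antisymm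
    (re_inner_nonpos_of_mem_orthogonal_posSubspace (ℑ N).2 hupper) ?_)
  have := re_inner_nonpos_of_mem_orthogonal_posSubspace (ℑ N).2.neg hlower
  rwa [neg_apply, inner_neg_right, neg_re, neg_nonpos] at this

theorem exists_finrank_le_add_add_of_le_halfPlaneSubspace [IsStarNormal N] {ω : ℂ} {ε : ℝ}
    {Z : Submodule ℂ H} [FiniteDimensional ℂ Z] (hZ : Z ≤ halfPlaneSubspace N ω ε) :
    ∃ X Y M : Submodule ℂ H, FiniteDimensional ℂ X ∧ FiniteDimensional ℂ Y ∧
      FiniteDimensional ℂ M ∧ X ≤ upperSubspace N ⊓ halfPlaneSubspace N ω ε ∧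
      Y ≤ upperSubspace (star N) ⊓ halfPlaneSubspace N ω ε ∧
      M ≤ realSubspace N ⊓ halfPlaneSubspace N ω ε ∧
      Module.finrank ℂ Z ≤ Module.finrank ℂ X + Module.finrank ℂ Y + Module.finrank ℂ M := by
  let P := (upperSubspace N).starProjection
  let Q := (upperSubspace (star N)).starProjection
  have hP : Commute N P :=
    commute_starProjection_upperSubspace (Commute.refl N) (star_comm_self' N)
  have hP' : Commute (star N) P :=
    commute_starProjection_upperSubspace (star_comm_self' N).symm (Commute.refl _)
  have hQ : Commute N Q := commute_starProjection_upperSubspace (star_comm_self' N)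
    ((star_star N).symm ▸ Commute.refl N)
  have hQ' : Commute (star N) Q := commute_starProjection_upperSubspace (Commute.refl _)
    ((star_star N).symm ▸ (star_comm_self' N).symm)
  have hmemP (x : H) (hx : x ∈ Z) := apply_mem_halfPlaneSubspace_of_commute hP hP' (hZ hx)
  have hmemQ (x : H) (hx : x ∈ Z) := apply_mem_halfPlaneSubspace_of_commute hQ hQ' (hZ hx)
  refine ⟨Z.map P.toLinearMap, Z.map Q.toLinearMap, Z.map (1 - P - Q).toLinearMap, inferInstance,
    inferInstance, inferInstance, ?_, ?_, ?_, finrank_le_finrank_map_add_add Z fun x _ => ?_⟩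
  · rintro _ ⟨x, hx, rfl⟩
    exact ⟨Submodule.starProjection_apply_mem _ x, hmemP x hx⟩
  · rintro _ ⟨x, hx, rfl⟩
    exact ⟨Submodule.starProjection_apply_mem _ x, hmemQ x hx⟩
  · rintro _ ⟨x, hx, rfl⟩
    exact ⟨sub_starProjection_sub_starProjection_mem_realSubspace N x,
      sub_mem (sub_mem (hZ hx) (hmemP x hx)) (hmemQ x hx)⟩
  · change P x + Q x + (x - P x - Q x) = x
    abel

end UpperSubspace

section Slope

variable {E : Type*} [NormedAddCommGroup E] [InnerProductSpace ℂ E]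

theorem inner_smul_apply_smul (T : E →L[ℂ] E) (c : ℂ) (x : E) :
    ⟪c • x, T (c • x)⟫_ℂ = (‖c‖ ^ 2 : ℝ) * ⟪x, T x⟫_ℂ := by
  rw [map_smul, inner_smul_left, inner_smul_right, ← mul_assoc, conj_mul', ofReal_pow]

theorem exists_forall_mul_im_le_re (T : E →L[ℂ] E) {X : Submodule ℂ E} [FiniteDimensional ℂ X]
    (hX₀ : X ≠ ⊥) (hX : ∀ x ∈ X, x ≠ 0 → 0 < (⟪x, T x⟫_ℂ).im) :
    ∃ s : ℝ, (∀ x ∈ X, s * (⟪x, T x⟫_ℂ).im ≤ (⟪x, T x⟫_ℂ).re) ∧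
      ∃ x ∈ X, x ≠ 0 ∧ (⟪x, T x⟫_ℂ).re = s * (⟪x, T x⟫_ℂ).im := by
  have : Nontrivial X := Submodule.nontrivial_iff_ne_bot.2 hX₀
  let slope (x : X) : ℝ := (⟪(x : E), T x⟫_ℂ).re / (⟪(x : E), T x⟫_ℂ).im
  have him (x : X) (hx : x ≠ 0) : 0 < (⟪(x : E), T x⟫_ℂ).im := hX x x.2 (by simpa using hx)
  have hcont : ContinuousOn slope (Metric.sphere 0 1) :=
    ContinuousOn.div (by fun_prop) (by fun_prop) fun x hx =>
      (him x (ne_zero_of_mem_unit_sphere ⟨x, hx⟩)).ne'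
  obtain ⟨x₀, hx₀, hmin⟩ := (isCompact_sphere (0 : X) 1).exists_isMinOn
    (NormedSpace.sphere_nonempty.2 zero_le_one) hcont
  have hx₀_ne : x₀ ≠ 0 := ne_zero_of_mem_unit_sphere ⟨x₀, hx₀⟩
  refine ⟨slope x₀, fun x hx => ?_, x₀, x₀.2, by simpa using hx₀_ne,
    (div_mul_cancel₀ _ (him x₀ hx₀_ne).ne').symm⟩
  rcases eq_or_ne x 0 with rfl | h0
  · simp only [inner_zero_left, zero_im, mul_zero, zero_re, le_refl]
  · let y : X := (‖x‖⁻¹ : ℂ) • ⟨x, hx⟩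
    have hy : ‖y‖ = 1 := norm_smul_inv_norm (𝕜 := ℂ) (x := (⟨x, hx⟩ : X)) (by simpa using h0)
    have hxy : slope y = slope ⟨x, hx⟩ := by
      have hc : (‖(‖x‖⁻¹ : ℂ)‖ ^ 2 : ℝ) ≠ 0 := by simpa using h0
      simp only [slope, y, Submodule.coe_smul, inner_smul_apply_smul, re_ofReal_mul, im_ofReal_mul]
      exact mul_div_mul_left _ _ hc
    rw [← le_div_iff₀ (hX x hx h0)]
    exact (hmin (mem_sphere_zero_iff_norm.2 hy)).trans_eq hxy

/-- `HasSlope N s i` says that the `i`-th largest slope of `N` on its upper spectral subspace,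
counted from `0`, is at least `s`, where the slope of `x` is `re ⟪x, N x⟫ / im ⟪x, N x⟫`. -/
def HasSlope (N : H →L[ℂ] H) (s : ℝ) (i : ℕ) : Prop :=
  ∃ X ≤ upperSubspace N, FiniteDimensional ℂ X ∧ i < Module.finrank ℂ X ∧
    ∀ x ∈ X, s * (⟪x, N x⟫_ℂ).im ≤ (⟪x, N x⟫_ℂ).re

variable {N : H →L[ℂ] H} {s : ℝ} {i j : ℕ}

theorem HasSlope.mono {s' : ℝ} (h : HasSlope N s' i) (hs : s ≤ s') : HasSlope N s i := by
  obtain ⟨X, hXN, hXfd, hi, hX⟩ := h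
  refine ⟨X, hXN, hXfd, hi, fun x hx => le_trans ?_ (hX x hx)⟩
  rcases eq_or_ne x 0 with rfl | h0
  · simp only [inner_zero_left, zero_im, mul_zero, le_refl]
  · exact mul_le_mul_of_nonneg_right hs (im_inner_pos_of_mem_upperSubspace (hXN hx) h0).le

theorem exists_hasSlope_of_lt_finrank {X : Submodule ℂ H} [FiniteDimensional ℂ X]
    (hX : X ≤ upperSubspace N) (hi : i < Module.finrank ℂ X) :
    ∃ s, HasSlope N s i ∧ ∃ x ∈ X, x ≠ 0 ∧ (⟪x, N x⟫_ℂ).re = s * (⟪x, N x⟫_ℂ).im := by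
  have hX₀ : X ≠ ⊥ := by
    rintro rfl
    simp at hi
  obtain ⟨s, hs, hx⟩ := exists_forall_mul_im_le_re N hX₀
    fun x hx => im_inner_pos_of_mem_upperSubspace (hX hx)
  exact ⟨s, ⟨X, hX, inferInstance, hi, hs⟩, hx⟩

/-- The spectral subspace of `N` for every half-plane `halfPlane ω ε` has dimension at least
`k`. -/
def HasHalfPlaneRank (N : H →L[ℂ] H) (k : ℕ) : Prop :=
  ∀ ω : ℂ, ω ≠ 0 → ∀ ε : ℝ, ε = 1 ∨ ε = -1 →
    (k : Cardinal) ≤ Module.rank ℂ (halfPlaneSubspace N ω ε)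

theorem halfPlaneSubspace_neg (N : H →L[ℂ] H) (ω : ℂ) (ε : ℝ) :
    halfPlaneSubspace (-N) ω ε = halfPlaneSubspace N (-ω) ε := by
  rw [halfPlaneSubspace, halfPlaneSubspace, neg_smul, smul_neg]

open scoped ComplexStarModule in
theorem halfPlaneSubspace_star (N : H →L[ℂ] H) (ω : ℂ) (ε : ℝ) :
    halfPlaneSubspace (star N) ω ε = halfPlaneSubspace N (-conj ω) (-ε) := by
  have hω : -conj ω • N = -star (ω • star N) := by
    rw [star_smul, star_star, neg_smul]
    rfl
  have hre (T : H →L[ℂ] H) : (ℜ (-star T) : H →L[ℂ] H) = -(ℜ T : H →L[ℂ] H) := by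
    rw [realPart_apply_coe, realPart_apply_coe, star_neg, star_star, ← neg_add_rev, smul_neg]
  rw [halfPlaneSubspace, halfPlaneSubspace, hω, hre, map_neg, AddSubgroup.coe_neg,
    imaginaryPart_star, neg_neg, neg_smul_neg]

protected theorem HasHalfPlaneRank.neg {k : ℕ} (h : HasHalfPlaneRank N k) :
    HasHalfPlaneRank (-N) k := fun ω hω ε hε => by
  rw [halfPlaneSubspace_neg]
  exact h (-ω) (neg_ne_zero.2 hω) ε hε

protected theorem HasHalfPlaneRank.star {k : ℕ} (h : HasHalfPlaneRank N k) :
    HasHalfPlaneRank (star N) k := fun ω hω ε hε => by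
  rw [halfPlaneSubspace_star]
  exact h _ (neg_ne_zero.2 ((map_ne_zero _).2 hω)) _ (by grind)

end Slope

section BalancedSlopes

variable {N : H →L[ℂ] H} {k i j m : ℕ}

/-- `HasRealNonnegRankLE N m` says that `m` bounds the dimension of the finite-dimensional subspaces
of the real spectral subspace on which the quadratic form of `N` is nonnegative. -/
def HasRealNonnegRankLE (N : H →L[ℂ] H) (m : ℕ) : Prop :=
  ∀ M ≤ realSubspace N, FiniteDimensional ℂ M → (∀ x ∈ M, 0 ≤ (⟪x, N x⟫_ℂ).re) →
    Module.finrank ℂ M ≤ m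

protected theorem HasRealNonnegRankLE.star (h : HasRealNonnegRankLE N m) :
    HasRealNonnegRankLE (star N) m := fun M hM hfd hre => by
  rw [realSubspace_star] at hM
  exact h M hM hfd fun x hx => by simpa only [inner_star_apply_self, conj_re] using hre x hx

theorem im_inner_neg_of_mem_upperSubspace_star {x : H} (hx : x ∈ upperSubspace (star N))
    (h0 : x ≠ 0) : (⟪x, N x⟫_ℂ).im < 0 := by
  have := im_inner_pos_of_mem_upperSubspace hx h0
  rwa [inner_star_apply_self, conj_im, neg_pos] at this

theorem HasHalfPlaneRank.exists_hasSlope [IsStarNormal N] (h : HasHalfPlaneRank N k)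
    (hm : HasRealNonnegRankLE N m) (hi : i + m < k) : ∃ s, HasSlope N s i := by
  obtain ⟨Z, hZ, _, hZk⟩ := exists_le_finrank_eq_of_le_rank (h 1 one_ne_zero 1 (Or.inl rfl))
  obtain ⟨X, Y, M, _, _, _, hX, hY, hM, hdim⟩ :=
    exists_finrank_le_add_add_of_le_halfPlaneSubspace hZ
  have hmem {x : H} (hx : x ∈ halfPlaneSubspace N 1 1) :
      0 < (⟪x, N x⟫_ℂ).im ∨ (⟪x, N x⟫_ℂ).im = 0 ∧ 0 ≤ (⟪x, N x⟫_ℂ).re := by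
    simpa only [halfPlane, one_mul, Set.mem_ofPred_eq] using
      inner_mem_halfPlane_of_mem_halfPlaneSubspace hx
  have hYbot : Y = ⊥ := (Submodule.eq_bot_iff Y).2 fun y hy => by_contra fun h0 => by
    have hneg := im_inner_neg_of_mem_upperSubspace_star (hY hy).1 h0
    rcases hmem (hY hy).2 with h1 | ⟨h1, -⟩ <;> linarith
  have hMm : Module.finrank ℂ M ≤ m := hm M (hM.trans inf_le_left) inferInstance fun x hx => by
    rcases hmem (hM hx).2 with h1 | ⟨-, h1⟩
    · exact absurd (im_inner_eq_zero_of_mem_realSubspace (hM hx).1) h1.ne'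
    · exact h1
  rw [hYbot, finrank_bot] at hdim
  obtain ⟨s, hs, -⟩ := exists_hasSlope_of_lt_finrank (hX.trans inf_le_left) (i := i) (by omega)
  exact ⟨s, hs⟩

theorem mem_halfPlane_neg_add_I_one {s : ℝ} {z : ℂ} (hz : z ∈ halfPlane (-s + I) 1) :
    s * z.im < z.re ∨ s * z.im = z.re ∧ z.im ≤ 0 := by
  have him : ((-s + I) * z).im = z.re - s * z.im := by simp; ring
  have hre : ((-s + I) * z).re = -(s * z.re + z.im) := by simp; ring
  rw [halfPlane, Set.mem_ofPred_eq, him, hre, one_mul, sub_pos, sub_eq_zero] at hz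
  refine hz.imp_right fun ⟨h1, h2⟩ => ⟨h1.symm, ?_⟩
  rw [h1] at h2
  nlinarith [sq_nonneg s]

theorem HasHalfPlaneRank.exists_gt_hasSlope_or_hasSlope_star [IsStarNormal N]
    (h : HasHalfPlaneRank N k) (hm : HasRealNonnegRankLE N m) (hij : i + j + m < k) (s : ℝ) :
    (∃ s' > s, HasSlope N s' i) ∨ HasSlope (star N) (-s) j := by
  have hω : -(s : ℂ) + I ≠ 0 := fun h0 => by simpa using congrArg im h0
  obtain ⟨Z, hZ, _, hZk⟩ := exists_le_finrank_eq_of_le_rank (h _ hω 1 (Or.inl rfl))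
  obtain ⟨X, Y, M, _, _, _, hX, hY, hM, hdim⟩ :=
    exists_finrank_le_add_add_of_le_halfPlaneSubspace hZ
  have hmem {x : H} (hx : x ∈ halfPlaneSubspace N (-s + I) 1) :=
    mem_halfPlane_neg_add_I_one (inner_mem_halfPlane_of_mem_halfPlaneSubspace hx)
  have hMm : Module.finrank ℂ M ≤ m := hm M (hM.trans inf_le_left) inferInstance fun x hx => by
    have him := im_inner_eq_zero_of_mem_realSubspace (hM hx).1
    rcases hmem (hM hx).2 with h1 | ⟨h1, -⟩ <;> rw [him, mul_zero] at h1
    exacts [h1.le, h1.le]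
  rcases lt_or_ge i (Module.finrank ℂ X) with hi | hi
  · obtain ⟨s', hs', x, hx, h0, hxs'⟩ := exists_hasSlope_of_lt_finrank (hX.trans inf_le_left) hi
    have hpos := im_inner_pos_of_mem_upperSubspace (hX hx).1 h0
    refine Or.inl ⟨s', ?_, hs'⟩
    rcases hmem (hX hx).2 with h1 | ⟨-, h1⟩
    · rw [hxs'] at h1
      exact lt_of_mul_lt_mul_right h1 hpos.le
    · exact absurd h1 hpos.not_ge
  · refine Or.inr ⟨Y, hY.trans inf_le_left, inferInstance, by omega, fun y hy => ?_⟩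
    rw [inner_star_apply_self, conj_im, conj_re, neg_mul_neg]
    exact (hmem (hY hy).2).elim le_of_lt fun h1 => h1.1.le

theorem exists_and_neg_of_exists_gt_or {p q : ℝ → Prop} (hp : ∀ s t, s ≤ t → p t → p s)
    (hp₀ : ∃ s, p s) (hq₀ : ∃ s, q s) (hpq : ∀ s, (∃ s' > s, p s') ∨ q (-s))
    (hqp : ∀ s, (∃ s' > s, q s') ∨ p (-s)) : ∃ s, p s ∧ q (-s) := by
  by_cases hbdd : BddAbove {s | p s}
  · set s₀ := sSup {s | p s}
    have hq : q (-s₀) := (hpq s₀).resolve_left fun ⟨s', hs', hps'⟩ =>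
      hs'.not_ge (le_csSup hbdd hps')
    rcases hqp (-s₀) with ⟨t, ht, hqt⟩ | hps₀
    · obtain ⟨s, hs, hst⟩ := exists_lt_of_lt_csSup hp₀ (neg_lt.1 ht)
      exact ⟨-t, hp _ _ hst.le hs, (neg_neg t).symm ▸ hqt⟩
    · exact ⟨s₀, neg_neg s₀ ▸ hps₀, hq⟩
  · obtain ⟨t, hqt⟩ := hq₀
    obtain ⟨s, hs, hts⟩ := not_bddAbove_iff.1 hbdd (-t)
    exact ⟨-t, hp _ _ hts.le hs, (neg_neg t).symm ▸ hqt⟩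

theorem HasHalfPlaneRank.exists_hasSlope_and_hasSlope_star_neg [IsStarNormal N]
    (h : HasHalfPlaneRank N k) (hm : HasRealNonnegRankLE N m) (hij : i + j + m < k) :
    ∃ s, HasSlope N s i ∧ HasSlope (star N) (-s) j := by
  refine exists_and_neg_of_exists_gt_or (fun s t hst ht => ht.mono hst)
    (h.exists_hasSlope hm (by omega)) (h.star.exists_hasSlope hm.star (by omega))
    (h.exists_gt_hasSlope_or_hasSlope_star hm hij) fun s => ?_
  simpa only [star_star] using
    h.star.exists_gt_hasSlope_or_hasSlope_star hm.star (i := j) (j := i) (by omega) s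

end BalancedSlopes

section NonnegSubspace

variable {E : Type*} [NormedAddCommGroup E] [InnerProductSpace ℂ E] {N : H →L[ℂ] H} {k n : ℕ}

theorem exists_diagonal_of_forall_hasSlope {s : Fin n → ℝ} (hs : ∀ i, HasSlope N (s i) i) :
    ∃ (e : Fin n → H) (a : Fin n → ℝ), (∀ i, e i ∈ upperSubspace N) ∧ (∀ i, s i ≤ a i) ∧
      ∀ i j, ⟪e i, N (e j)⟫_ℂ = if i = j then (a i : ℂ) + I else 0 := by
  choose X hXN hXfd hXn hXs using hs
  let V : Submodule ℂ H := ⨆ i, X i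
  have hXV (i : Fin n) : X i ≤ V := le_iSup X i
  have hVN : V ≤ upperSubspace N := iSup_le hXN
  have hn : n ≤ Module.finrank ℂ V := by
    rcases Nat.eq_zero_or_pos n with rfl | hpos
    · exact Nat.zero_le _
    · have := (hXn ⟨n - 1, by omega⟩).trans_le (Submodule.finrank_mono (hXV _))
      simp only at this
      omega
  obtain ⟨e, a, hdiag, ha⟩ := exists_diagonal_of_forall_im_pos (T := compression V N.toLinearMap)
    (fun x hx => by
      rw [inner_compression]
      exact im_inner_pos_of_mem_upperSubspace (hVN x.2) (by simpa using hx)) rfl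
  refine ⟨fun i => e (i.castLE hn), fun i => a (i.castLE hn), fun i => hVN (e _).2, fun i => ?_,
    fun i j => ?_⟩
  · refine ha _ _ ((X i).submoduleOf V) ?_ fun y hy => ?_
    · rw [(Submodule.submoduleOfEquivOfLe (hXV i)).finrank_eq]
      exact hXn i
    · rw [inner_compression]
      exact hXs i y hy
  · have hij := hdiag (i.castLE hn) (j.castLE hn)
    simp only [inner_compression, Fin.castLE_inj] at hij
    exact hij

theorem inner_apply_sum_smul_of_diagonal {T : E →L[ℂ] E} {e : Fin n → E} {d : Fin n → ℂ}
    (hd : ∀ i j, ⟪e i, T (e j)⟫_ℂ = if i = j then d i else 0) (c : Fin n → ℂ) (i : Fin n) :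
    ⟪e i, T (∑ j, c j • e j)⟫_ℂ = c i * d i := by
  simp only [map_sum, map_smul, inner_sum, inner_smul_right, hd, mul_ite, mul_zero,
    Finset.sum_ite_eq, Finset.mem_univ, if_true]

theorem inner_sum_smul_apply_sum_smul_of_diagonal {T : E →L[ℂ] E} {e : Fin n → E} {d : Fin n → ℂ}
    (hd : ∀ i j, ⟪e i, T (e j)⟫_ℂ = if i = j then d i else 0) (c : Fin n → ℂ) :
    ⟪∑ i, c i • e i, T (∑ i, c i • e i)⟫_ℂ = ∑ i, (‖c i‖ ^ 2 : ℝ) * d i := by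
  rw [sum_inner]
  refine Finset.sum_congr rfl fun i _ => ?_
  rw [inner_smul_left, inner_apply_sum_smul_of_diagonal hd, ← mul_assoc, conj_mul', ofReal_pow]

theorem linearIndependent_of_diagonal {T : E →L[ℂ] E} {e : Fin n → E} {d : Fin n → ℂ}
    (hd : ∀ i j, ⟪e i, T (e j)⟫_ℂ = if i = j then d i else 0) (hd₀ : ∀ i, d i ≠ 0) :
    LinearIndependent ℂ e := by
  refine Fintype.linearIndependent_iff.2 fun c hc i => ?_
  have := inner_apply_sum_smul_of_diagonal hd c i
  rw [hc, map_zero, inner_zero_right] at this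
  exact (mul_eq_zero.1 this.symm).resolve_right (hd₀ i)

theorem inner_add_apply_add_of_isOrtho {T : E →L[ℂ] E} {S S' : Submodule ℂ E} (h : S ⟂ S')
    (hS : ∀ x ∈ S, T x ∈ S) (hS' : ∀ x ∈ S', T x ∈ S') {x y : E} (hx : x ∈ S) (hy : y ∈ S') :
    ⟪x + y, T (x + y)⟫_ℂ = ⟪x, T x⟫_ℂ + ⟪y, T y⟫_ℂ := by
  rw [map_add, inner_add_left, inner_add_right, inner_add_right, h.inner_eq hx (hS' y hy),
    h.symm.inner_eq hy (hS x hx), add_zero, zero_add]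

open scoped ComplexOrder

theorem exists_nonneg_le_upperSubspace_sup_star_of_diagonal [IsStarNormal N] {e f : Fin n → H}
    {a b : Fin n → ℝ} (heN : ∀ i, e i ∈ upperSubspace N) (hfN : ∀ i, f i ∈ upperSubspace (star N))
    (he : ∀ i j, ⟪e i, N (e j)⟫_ℂ = if i = j then (a i : ℂ) + I else 0)
    (hf : ∀ i j, ⟪f i, star N (f j)⟫_ℂ = if i = j then (b i : ℂ) + I else 0)
    (hab : ∀ i, 0 ≤ a i + b i) :
    ∃ V ≤ upperSubspace N ⊔ upperSubspace (star N), FiniteDimensional ℂ V ∧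
      Module.finrank ℂ V = n ∧ ∀ x ∈ V, 0 ≤ ⟪x, N x⟫_ℂ := by
  have hu (c : Fin n → ℂ) : ∑ i, c i • e i ∈ upperSubspace N :=
    sum_mem fun i _ => Submodule.smul_mem _ _ (heN i)
  have hw (c : Fin n → ℂ) : ∑ i, c i • f i ∈ upperSubspace (star N) :=
    sum_mem fun i _ => Submodule.smul_mem _ _ (hfN i)
  let Φ : (Fin n → ℂ) →ₗ[ℂ] H := Fintype.linearCombination ℂ (e + f)
  have hΦ (c : Fin n → ℂ) : Φ c = ∑ i, c i • e i + ∑ i, c i • f i := by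
    simp only [Φ, Fintype.linearCombination_apply, Pi.add_apply, smul_add, Finset.sum_add_distrib]
  have hinj : Function.Injective Φ := by
    refine (injective_iff_map_eq_zero Φ).2 fun c hc => funext fun i => ?_
    have hsum : ∑ i, c i • e i = 0 := Submodule.disjoint_def.1
      isOrtho_upperSubspace_star.disjoint _ (hu c) (by
        rw [eq_neg_of_add_eq_zero_left ((hΦ c).symm.trans hc)]
        exact neg_mem (hw c))
    exact Fintype.linearIndependent_iff.1 (linearIndependent_of_diagonal he fun i h0 => by
      simpa using congrArg im h0) c hsum i
  refine ⟨LinearMap.range Φ, ?_, inferInstance,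
    by rw [LinearMap.finrank_range_of_inj hinj, Module.finrank_fin_fun], ?_⟩
  · rintro _ ⟨c, rfl⟩
    rw [hΦ]
    exact Submodule.add_mem_sup (hu c) (hw c)
  · rintro _ ⟨c, rfl⟩
    have hform : ⟪Φ c, N (Φ c)⟫_ℂ = ((∑ i, ‖c i‖ ^ 2 * (a i + b i) : ℝ) : ℂ) := by
      rw [hΦ, inner_add_apply_add_of_isOrtho isOrtho_upperSubspace_star
        (fun _ => apply_mem_upperSubspace) (fun _ => apply_mem_upperSubspace_star) (hu c) (hw c),
        inner_sum_smul_apply_sum_smul_of_diagonal he,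
        ← conj_conj ⟪∑ i, c i • f i, N (∑ i, c i • f i)⟫_ℂ, ← inner_star_apply_self,
        inner_sum_smul_apply_sum_smul_of_diagonal hf, map_sum, ← Finset.sum_add_distrib, ofReal_sum]
      refine Finset.sum_congr rfl fun i _ => ?_
      simp only [map_mul, map_add, conj_ofReal, conj_I, ofReal_mul, ofReal_add]
      ring
    rw [hform]
    exact_mod_cast Finset.sum_nonneg fun i _ => mul_nonneg (sq_nonneg _) (hab i)

theorem exists_nonneg_le_upperSubspace_sup_star [IsStarNormal N]
    (h : ∀ i : Fin n, ∃ s, HasSlope N s i ∧ HasSlope (star N) (-s) i.rev) :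
    ∃ V ≤ upperSubspace N ⊔ upperSubspace (star N), FiniteDimensional ℂ V ∧
      Module.finrank ℂ V = n ∧ ∀ x ∈ V, 0 ≤ ⟪x, N x⟫_ℂ := by
  choose s hs hs' using h
  obtain ⟨e, a, heN, hsa, he⟩ := exists_diagonal_of_forall_hasSlope hs
  obtain ⟨f, b, hfN, hsb, hf⟩ := exists_diagonal_of_forall_hasSlope (N := star N)
    (s := fun i => -s i.rev) fun i => by simpa only [Fin.rev_rev] using hs' i.rev
  refine exists_nonneg_le_upperSubspace_sup_star_of_diagonal (f := f ∘ Fin.rev) (b := b ∘ Fin.rev)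
    heN (fun i => hfN i.rev) he
    (fun i j => (hf i.rev j.rev).trans (if_congr Fin.rev_inj rfl rfl)) fun i => ?_
  have hb : -s i ≤ b i.rev := by simpa only [Fin.rev_rev] using hsb i.rev
  rw [Function.comp_apply]
  linarith [hsa i]

theorem exists_realSubspace_nonneg_finrank_eq (N : H →L[ℂ] H) (k : ℕ) :
    ∃ M ≤ realSubspace N, FiniteDimensional ℂ M ∧ (∀ x ∈ M, 0 ≤ (⟪x, N x⟫_ℂ).re) ∧
      Module.finrank ℂ M ≤ k ∧
        (Module.finrank ℂ M < k → HasRealNonnegRankLE N (Module.finrank ℂ M)) := by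
  classical
  let P (m : ℕ) : Prop := ∃ M ≤ realSubspace N, FiniteDimensional ℂ M ∧
    (∀ x ∈ M, 0 ≤ (⟪x, N x⟫_ℂ).re) ∧ Module.finrank ℂ M = m
  have hP₀ : P 0 := ⟨⊥, bot_le, inferInstance, by simp, finrank_bot ℂ H⟩
  obtain ⟨M, hMN, hMfd, hM, hMm⟩ := Nat.findGreatest_spec (P := P) (Nat.zero_le k) hP₀
  refine ⟨M, hMN, hMfd, hM, hMm.trans_le (Nat.findGreatest_le k), fun hlt M' hM'N _ hM' => ?_⟩
  by_contra! hlt'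
  obtain ⟨M'', hM'', hfd, hdim⟩ := exists_le_finrank_eq_of_le_finrank (Nat.succ_le_of_lt hlt')
  refine Nat.findGreatest_is_greatest (P := P) (hMm ▸ Nat.lt_succ_self _) hlt ?_
  exact ⟨M'', hM''.trans hM'N, hfd, fun x hx => hM' x (hM'' hx), hdim⟩

theorem HasHalfPlaneRank.exists_nonneg [IsStarNormal N] (h : HasHalfPlaneRank N k) :
    ∃ V : Submodule ℂ H, FiniteDimensional ℂ V ∧ Module.finrank ℂ V = k ∧
      ∀ x ∈ V, 0 ≤ ⟪x, N x⟫_ℂ := by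
  obtain ⟨M, hMN, _, hM, hMk, hMmax⟩ := exists_realSubspace_nonneg_finrank_eq N k
  obtain ⟨V, hVN, _, hVn, hV⟩ := exists_nonneg_le_upperSubspace_sup_star
    (N := N) (n := k - Module.finrank ℂ M) fun i => by
      have hi := i.2
      have hrev := Fin.val_rev i
      exact h.exists_hasSlope_and_hasSlope_star_neg (i := i) (hMmax (by omega)) (by omega)
  have hortho : realSubspace N ⟂ upperSubspace N ⊔ upperSubspace (star N) :=
    Submodule.isOrtho_sup_right.2 ⟨isOrtho_realSubspace_upperSubspace,
      realSubspace_star N ▸ isOrtho_realSubspace_upperSubspace⟩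
  have hinv (x : H) (hx : x ∈ upperSubspace N ⊔ upperSubspace (star N)) :
      N x ∈ upperSubspace N ⊔ upperSubspace (star N) := by
    obtain ⟨y, hy, z, hz, rfl⟩ := Submodule.mem_sup.1 hx
    rw [map_add]
    exact Submodule.add_mem_sup (apply_mem_upperSubspace hy) (apply_mem_upperSubspace_star hz)
  refine ⟨M ⊔ V, inferInstance, ?_, fun x hx => ?_⟩
  · have hdim := Submodule.finrank_sup_add_finrank_inf_eq M V
    rw [(hortho.mono hMN hVN).disjoint.eq_bot, finrank_bot] at hdim
    omega
  · obtain ⟨y, hy, z, hz, rfl⟩ := Submodule.mem_sup.1 hx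
    rw [inner_add_apply_add_of_isOrtho hortho (fun _ => apply_mem_realSubspace) hinv
      (hMN hy) (hVN hz)]
    refine add_nonneg ?_ (hV z hz)
    exact nonneg_iff.2 ⟨hM y hy, (im_inner_eq_zero_of_mem_realSubspace (hMN hy)).symm⟩

theorem HasHalfPlaneRank.exists_isotropic [IsStarNormal N] (h : HasHalfPlaneRank N k) :
    ∃ V : Submodule ℂ H, FiniteDimensional ℂ V ∧ Module.finrank ℂ V = k ∧
      ∀ x ∈ V, ⟪x, N x⟫_ℂ = 0 := by
  have : IsStarNormal (-N) := inferInstance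
  obtain ⟨X, _, hXk, hX⟩ := h.exists_nonneg
  obtain ⟨Y, _, hYk, hY⟩ := h.neg.exists_nonneg
  obtain ⟨V, -, hV⟩ := exists_isotropic_finrank_eq (T := N.toLinearMap) hX
    (fun y hy => by simpa using hY y hy) hXk.ge hYk.ge
  exact ⟨V, hV⟩

end NonnegSubspace

section RankRange

variable {E : Type*} [NormedAddCommGroup E] [InnerProductSpace ℂ E] {A : H →L[ℂ] H}

theorem inner_sub_smul_one_apply_self (T : E →L[ℂ] E) (c : ℂ) {x : E} (hx : ‖x‖ = 1) :
    ⟪x, (T - c • 1) x⟫_ℂ = ⟪x, T x⟫_ℂ - c := by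
  rw [sub_apply, smul_apply, one_apply_eq_self, inner_sub_right, inner_smul_right,
    inner_self_eq_norm_sq_to_K, hx, RCLike.ofReal_one, one_pow, mul_one]

theorem starProjection_comp_comp_starProjection_eq_zero {V : Submodule ℂ E}
    [V.HasOrthogonalProjection] {T : E →L[ℂ] E} (hV : ∀ x ∈ V, ⟪x, T x⟫_ℂ = 0) :
    V.starProjection ∘L T ∘L V.starProjection = 0 := by
  rw [← ContinuousLinearMap.coe_inj, ContinuousLinearMap.toLinearMap_zero, ← inner_map_self_eq_zero]
  intro x
  rw [inner_eq_zero_symm]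
  exact (V.inner_starProjection_left_eq_right _ _).symm.trans (hV _ (V.starProjection_apply_mem x))

theorem mem_rankKRange_iff {k : ℕ} {lam : ℂ} :
    lam ∈ rankKRange k A ↔ ∃ V : Submodule ℂ H, FiniteDimensional ℂ V ∧
      Module.finrank ℂ V = k ∧ ∀ x ∈ V, ⟪x, (A - lam • 1) x⟫_ℂ = 0 := by
  constructor
  · rintro ⟨P, ⟨hPsa, hPP⟩, hPk, hP⟩
    refine ⟨LinearMap.range (P : H →ₗ[ℂ] H), ?_, Module.finrank_eq_of_rank_eq hPk, ?_⟩
    · exact Module.rank_lt_aleph0_iff.1 (hPk.trans_lt (Cardinal.natCast_lt_aleph0))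
    · rintro _ ⟨x, rfl⟩
      change ⟪P x, (A - lam • 1) (P x)⟫_ℂ = 0
      have h1 : P (A (P x)) = lam • P x := DFunLike.congr_fun hP x
      have h2 : P (P x) = P x := DFunLike.congr_fun hPP x
      rw [← inner_apply_eq_of_isSelfAdjoint hPsa, sub_apply, map_sub, h1, smul_apply,
        one_apply_eq_self, map_smul, h2, sub_self, inner_zero_right]
  · rintro ⟨V, _, hVk, hV⟩
    refine ⟨V.starProjection, ⟨isSelfAdjoint_starProjection V, ?_⟩, ?_, ?_⟩
    · exact V.isIdempotentElem_starProjection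
    · rw [opRank, Submodule.range_starProjection, ← Module.finrank_eq_rank, hVk]
    · have h := starProjection_comp_comp_starProjection_eq_zero hV
      ext x
      have hx := DFunLike.congr_fun h x
      have hid : V.starProjection (V.starProjection x) = V.starProjection x :=
        DFunLike.congr_fun V.isIdempotentElem_starProjection x
      change V.starProjection ((A - lam • 1) (V.starProjection x)) = 0 at hx
      rw [sub_apply, map_sub, smul_apply, map_smul, one_apply_eq_self, hid, sub_eq_zero] at hx
      exact hx

theorem exists_ne_zero_mem_orthogonal_of_rank_lt {V W : Submodule ℂ E} [W.HasOrthogonalProjection]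
    (h : Module.rank ℂ W < Module.rank ℂ V) : ∃ x ∈ V, x ≠ 0 ∧ x ∈ Wᗮ := by
  by_contra! hVW
  refine h.not_ge (LinearMap.rank_le_of_injective
    ((W.orthogonalProjectionOnto : E →ₗ[ℂ] W).domRestrict V) ?_)
  rw [LinearMap.injective_domRestrict_iff, Submodule.disjoint_def]
  intro x hxV hxW
  by_contra h0
  exact hVW x hxV h0 (W.orthogonalProjectionOnto_eq_zero_iff.1 hxW)

theorem orthogonal_le_of_isOrtho_of_sup_eq_top {V W : Submodule ℂ E} (h : V ⟂ W)
    (hsup : V ⊔ W = ⊤) : Vᗮ ≤ W := by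
  intro x hx
  obtain ⟨a, ha, b, hb, rfl⟩ := Submodule.mem_sup.1 (hsup ▸ Submodule.mem_top : x ∈ V ⊔ W)
  have hab : ⟪a, a + b⟫_ℂ = 0 := hx a ha
  rw [inner_add_right, h.inner_eq ha hb, add_zero, inner_self_eq_zero] at hab
  rwa [hab, zero_add]

theorem exists_norm_eq_one_inner_eq_of_rank_lt {T : E →L[ℂ] E} {c : ℂ} {V V₁ V₂ : Submodule ℂ E}
    [V₁.HasOrthogonalProjection] (hV : ∀ x ∈ V, ⟪x, (T - c • 1) x⟫_ℂ = 0) (horth : V₁ ⟂ V₂)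
    (hsup : V₁ ⊔ V₂ = ⊤) (hrank : Module.rank ℂ V₁ < Module.rank ℂ V) :
    ∃ x ∈ V₂, ‖x‖ = 1 ∧ ⟪x, T x⟫_ℂ = c := by
  obtain ⟨x, hxV, h0, hx⟩ := exists_ne_zero_mem_orthogonal_of_rank_lt hrank
  have hnorm : ‖((‖x‖⁻¹ : ℝ) : ℂ) • x‖ = 1 := by
    rw [ofReal_inv]
    exact norm_smul_inv_norm h0
  refine ⟨_, V₂.smul_mem _ (orthogonal_le_of_isOrtho_of_sup_eq_top horth hsup hx), hnorm, ?_⟩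
  rw [← sub_eq_zero, ← inner_sub_smul_one_apply_self T c hnorm]
  exact hV _ (V.smul_mem _ hxV)

theorem isStarNormal_sub_smul_one (A : H →L[ℂ] H) [IsStarNormal A] (c : ℂ) :
    IsStarNormal (A - c • 1) :=
  Commute.isStarNormal_sub (by rw [star_smul, star_one]; exact (Commute.one_right A).smul_right _)

theorem apply_mem_halfPlaneSubspace_sub_smul_one [IsStarNormal A] {c ω : ℂ} {ε : ℝ} {x : H}
    (hx : x ∈ halfPlaneSubspace (A - c • 1) ω ε) :
    A x ∈ halfPlaneSubspace (A - c • 1) ω ε ∧ star A x ∈ halfPlaneSubspace (A - c • 1) ω ε := by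
  have hscalar (d : ℂ) (X : H →L[ℂ] H) : Commute (d • 1 : H →L[ℂ] H) X :=
    (Commute.one_left X).smul_left d
  have hA : Commute (star A) A := star_comm_self
  refine ⟨apply_mem_halfPlaneSubspace_of_commute ((Commute.refl A).sub_left (hscalar _ _)) ?_ hx,
    apply_mem_halfPlaneSubspace_of_commute (hA.symm.sub_left (hscalar _ _)) ?_ hx⟩ <;>
  rw [star_sub, star_smul, star_one]
  exacts [hA.sub_left (hscalar _ _), (Commute.refl (star A)).sub_left (hscalar _ _)]

theorem apply_mem_orthogonal_halfPlaneSubspace_sub_smul_one [IsStarNormal A] {c ω : ℂ} {ε : ℝ}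
    {x : H} (hx : x ∈ (halfPlaneSubspace (A - c • 1) ω ε)ᗮ) :
    A x ∈ (halfPlaneSubspace (A - c • 1) ω ε)ᗮ ∧
      star A x ∈ (halfPlaneSubspace (A - c • 1) ω ε)ᗮ :=
  ⟨apply_mem_orthogonal_of_star
      (fun _ hy => (apply_mem_halfPlaneSubspace_sub_smul_one hy).2) hx,
    apply_mem_orthogonal_of_star
      (fun _ hy => (star_star A).symm ▸ (apply_mem_halfPlaneSubspace_sub_smul_one hy).1) hx⟩

theorem inner_apply_sub_mem_halfPlane [IsStarNormal A] {c ω : ℂ} {ε : ℝ} {x : H}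
    (hx : x ∈ halfPlaneSubspace (A - c • 1) ω ε) (hx1 : ‖x‖ = 1) :
    ⟪x, A x⟫_ℂ - c ∈ halfPlane ω ε := by
  have := isStarNormal_sub_smul_one A c
  rw [← inner_sub_smul_one_apply_self A c hx1]
  exact inner_mem_halfPlane_of_mem_halfPlaneSubspace hx

theorem inner_apply_sub_notMem_halfPlane [IsStarNormal A] {c ω : ℂ} {ε : ℝ} {x : H}
    (hx : x ∈ (halfPlaneSubspace (A - c • 1) ω ε)ᗮ) (hx1 : ‖x‖ = 1) :
    ⟪x, A x⟫_ℂ - c ∉ halfPlane ω ε := by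
  have := isStarNormal_sub_smul_one A c
  rw [← inner_sub_smul_one_apply_self A c hx1]
  exact inner_notMem_halfPlane_of_mem_orthogonal_halfPlaneSubspace hx
    (norm_ne_zero_iff.1 (hx1 ▸ one_ne_zero))

end RankRange

/-- For a normal operator `A` and `k ≤ dim ℋ`, `λ ∉ Λ_k(A)` iff `ℋ` decomposes
orthogonally as `V₁ ⊕ V₂` with both summands invariant under `A` and `A*`,
`dim V₁ ≤ k - 1`, the numerical range of `A` restricted to `V₁` contained in
`λ + S` and that of the restriction to `V₂` contained in `ℂ \ (λ + S)`, where
`S = e^{it}(𝒫 ∪ L̃)` for some `t ∈ ℝ`, `𝒫` the open upper half-plane and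
`L̃ = (-∞,0]` or `[0,∞)`. -/
theorem not_mem_rankKRange_iff_normal
    (A : H →L[ℂ] H)
    (hA : ContinuousLinearMap.adjoint A ∘L A = A ∘L ContinuousLinearMap.adjoint A)
    (k : ℕ) (hk : 1 ≤ k) (hkdim : (k : Cardinal) ≤ Module.rank ℂ H) (lam : ℂ) :
    lam ∉ rankKRange k A ↔
      ∃ (t : ℝ) (L : Set ℝ), (L = Set.Iic 0 ∨ L = Set.Ici 0) ∧
        ∃ V₁ V₂ : Submodule ℂ H,
          IsClosed (V₁ : Set H) ∧ IsClosed (V₂ : Set H) ∧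
          (∀ x ∈ V₁, ∀ y ∈ V₂, ⟪x, y⟫_ℂ = 0) ∧
          V₁ ⊔ V₂ = ⊤ ∧
          (∀ x ∈ V₁, A x ∈ V₁ ∧ ContinuousLinearMap.adjoint A x ∈ V₁) ∧
          (∀ x ∈ V₂, A x ∈ V₂ ∧ ContinuousLinearMap.adjoint A x ∈ V₂) ∧
          Module.rank ℂ V₁ ≤ ((k - 1 : ℕ) : Cardinal) ∧
          (∀ x ∈ V₁, ‖x‖ = 1 →
            Complex.exp (-(t : ℂ) * Complex.I) * (⟪x, A x⟫_ℂ - lam) ∈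
              ({w : ℂ | 0 < w.im} ∪ (Complex.ofReal '' L))) ∧
          (∀ x ∈ V₂, ‖x‖ = 1 →
            Complex.exp (-(t : ℂ) * Complex.I) * (⟪x, A x⟫_ℂ - lam) ∉
              ({w : ℂ | 0 < w.im} ∪ (Complex.ofReal '' L))) := by
  have : IsStarNormal A := ⟨hA⟩
  have := isStarNormal_sub_smul_one A lam
  rw [mem_rankKRange_iff]
  constructor
  · intro hlam
    by_contra hdec
    refine hlam <| HasHalfPlaneRank.exists_isotropic fun ω hω ε hε => ?_
    by_contra! hlt
    obtain ⟨t, L, hL, hmem⟩ := exists_mem_halfPlane_iff hω hε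
    exact hdec ⟨t, L, hL, halfPlaneSubspace (A - lam • 1) ω ε, _,
      isClosed_halfPlaneSubspace, Submodule.isClosed_orthogonal _, fun x hx y hy => hy x hx,
      Submodule.sup_orthogonal_of_hasOrthogonalProjection,
      fun x hx => apply_mem_halfPlaneSubspace_sub_smul_one hx,
      fun x hx => apply_mem_orthogonal_halfPlaneSubspace_sub_smul_one hx,
      by rwa [← Cardinal.lt_natCast_add_one_iff, ← Nat.cast_add_one, Nat.sub_add_cancel hk],
      fun x hx hx1 => (hmem _).1 (inner_apply_sub_mem_halfPlane hx hx1),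
      fun x hx hx1 => (hmem _).not.1 (inner_apply_sub_notMem_halfPlane hx hx1)⟩
  · rintro ⟨t, L, hL, V₁, V₂, hV₁, -, horth, hsup, -, -, hrank, -, hV₂⟩ ⟨V, _, hVk, hV⟩
    have : CompleteSpace V₁ := hV₁.completeSpace_coe
    have hlt : Module.rank ℂ V₁ < Module.rank ℂ V := by
      rw [← Module.finrank_eq_rank ℂ V, hVk]
      exact hrank.trans_lt (Nat.cast_lt.2 (Nat.sub_lt hk one_pos))
    obtain ⟨x, hx, hx1, hlam⟩ :=
      exists_norm_eq_one_inner_eq_of_rank_lt hV (Submodule.isOrtho_iff_inner_eq.2 horth) hsup hlt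
    apply hV₂ x hx hx1
    rw [hlam, sub_self, mul_zero]
    exact Or.inr ⟨0, by rcases hL with rfl | rfl <;> exact Set.self_mem_Iic, ofReal_zero⟩
end
end

section
/- Let ℋ be an infinite-dimensional complex Hilbert space and A ∈ B(ℋ). Let 𝒮 be any set of finite-rank operators on ℋ containing {2e^{iξ}‖A‖P : ξ ∈ [0,2π), P a finite-rank orthogonal projection on ℋ}. Then Λ_∞(A) = ⋂_{k ≥ 1} Λ_k(A) = ⋂{W(A+F) : F ∈ 𝒮}. -/
noncomputable section

open scoped InnerProductSpace
open Complex

variable {H : Type*} [NormedAddCommGroup H] [InnerProductSpace ℂ H] [CompleteSpace H]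

/-- The rank-`∞` numerical range `Λ_∞(A)`. -/
def rankInfRange (A : H →L[ℂ] H) : Set ℂ :=
  { lam | ∃ P : H →L[ℂ] H, IsOrthProj P ∧ Cardinal.aleph0 ≤ opRank P ∧
      P ∘L A ∘L P = lam • P }

/-!
The inclusion `⋂ Λ_k(A) ⊆ W(A + F)` holds because a finite-rank `F` kills a nonzero vector of every
subspace of larger dimension, in particular of one on which `A` compresses to a scalar.

Conversely, let `lam ∈ W(A + 2u‖A‖P)` for all unit `u` and all finite-rank projections `P`. It
suffices to show `lam ∈ W(A|Vᗮ)` for every finite-dimensional `V`, since then an orthonormal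
sequence on whose span `A` compresses to `lam` can be chosen one vector at a time. If
`lam ∉ W(A|Vᗮ)`, this set being convex by Toeplitz–Hausdorff, some unit `u` makes the form of
`T = Re (u (A - lam))` nonnegative on `Vᗮ`; hence the negative spectral subspace `N` of `T` is
finite-dimensional. Let `Q` project onto `N ⊔ V` and let the unit vector `x` realise
`lam ∈ W(A + 2(conj u)‖A‖Q)`, so that `⟪x, T x⟫ = -2‖A‖‖Q x‖²`. Only the component of `x` in `N`
contributes negatively to `⟪x, T x⟫`, and `T ≥ -(‖A‖ + Re (u lam))` with `Re (u lam) < ‖A‖`. This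
forces `Q x = 0`, so `x ∈ Vᗮ` and `⟪x, A x⟫ = lam`, a contradiction.
-/

open scoped ComplexConjugate

theorem exists_ne_zero_forall_le_of_convex {F : Type*} [NormedAddCommGroup F] [NormedSpace ℝ F]
    [FiniteDimensional ℝ F] {C : Set F} (hC : Convex ℝ C) (hne : C.Nonempty) {x : F}
    (hx : x ∉ C) : ∃ f : StrongDual ℝ F, f ≠ 0 ∧ ∀ a ∈ C, f a ≤ f x := by
  by_cases hint : (interior C).Nonempty
  · obtain ⟨f, hf⟩ := geometric_hahn_banach_of_nonempty_interior_point hC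
      (fun h => hx (interior_subset h)) hint
    exact ⟨f, hf⟩
  have hdir : (affineSpan ℝ C).direction < ⊤ := by
    rwa [lt_top_iff_ne_top, Ne, AffineSubspace.direction_eq_top_iff_of_nonempty
      ((affineSpan_nonempty ℝ).mpr hne), ← hC.interior_nonempty_iff_affineSpan_eq_top]
  obtain ⟨g, hg0, hg⟩ := Submodule.exists_le_ker_of_lt_top _ hdir
  obtain ⟨b, hb⟩ := hne
  have hconst : ∀ a ∈ C, g a = g b := fun a ha => by
    have hab : a -ᵥ b ∈ (affineSpan ℝ C).direction :=
      AffineSubspace.vsub_mem_direction (subset_affineSpan ℝ C ha) (subset_affineSpan ℝ C hb)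
    simpa [sub_eq_zero] using hg hab
  have hg0' : LinearMap.toContinuousLinearMap g ≠ 0 := by simpa using hg0
  rcases le_total (g b) (g x) with h | h
  · exact ⟨LinearMap.toContinuousLinearMap g, hg0', fun a ha => by simpa [hconst a ha] using h⟩
  · exact ⟨-LinearMap.toContinuousLinearMap g, neg_ne_zero.mpr hg0',
      fun a ha => by simpa [hconst a ha] using h⟩

theorem exists_norm_eq_one_forall_re_mul_le {C : Set ℂ} (hC : Convex ℝ C) (hne : C.Nonempty)
    {z : ℂ} (hz : z ∉ C) : ∃ u : ℂ, ‖u‖ = 1 ∧ ∀ w ∈ C, (u * z).re ≤ (u * w).re := by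
  obtain ⟨f, hf0, hf⟩ := exists_ne_zero_forall_le_of_convex hC hne hz
  obtain ⟨v, rfl⟩ := (InnerProductSpace.toDual ℝ ℂ).surjective f
  have hv : v ≠ 0 := by rintro rfl; simp at hf0
  have key (w : ℂ) : (-(‖v‖ : ℂ)⁻¹ * conj v * w).re = -(‖v‖⁻¹ * ⟪v, w⟫_ℝ) := by
    rw [Complex.inner, ← Complex.re_ofReal_mul, ← Complex.neg_re]
    push_cast
    ring_nf
  refine ⟨-(‖v‖ : ℂ)⁻¹ * conj v, by simp [hv], fun w hw => ?_⟩
  rw [key, key]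
  have := hf w hw
  simp only [InnerProductSpace.toDual_apply_apply] at this
  gcongr

section NumericalRange

variable {E : Type*} [NormedAddCommGroup E] [InnerProductSpace ℂ E]

/-- The numerical range `W(A|M)` of the compression of `A` to the subspace `M`. -/
def numRangeOn (A : E →L[ℂ] E) (M : Submodule ℂ E) : Set ℂ :=
  {z | ∃ x ∈ M, ‖x‖ = 1 ∧ ⟪x, A x⟫_ℂ = z}

theorem numRangeOn_top (A : E →L[ℂ] E) : numRangeOn A ⊤ = numRange A := by
  simp [numRangeOn, numRange]

theorem mem_numRangeOn_of_inner_eq {A : E →L[ℂ] E} {M : Submodule ℂ E} {x : E} (hx : x ∈ M)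
    (hx0 : x ≠ 0) {z : ℂ} (hz : ⟪x, A x⟫_ℂ = z * ‖x‖ ^ 2) : z ∈ numRangeOn A M := by
  have hnorm : (‖x‖ : ℂ) ≠ 0 := by simpa using hx0
  refine ⟨(‖x‖ : ℂ)⁻¹ • x, M.smul_mem _ hx, by simp [norm_smul, hx0], ?_⟩
  rw [map_smul, inner_smul_left, inner_smul_right, hz, map_inv₀, conj_ofReal]
  field_simp

theorem numRangeOn_nonempty (A : E →L[ℂ] E) {M : Submodule ℂ E} (hM : M ≠ ⊥) :
    (numRangeOn A M).Nonempty := by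
  obtain ⟨x, hx, hx0⟩ := M.exists_mem_ne_zero_of_ne_bot hM
  have hnorm : (‖x‖ : ℂ) ≠ 0 := by simpa using hx0
  exact ⟨⟪x, A x⟫_ℂ / ‖x‖ ^ 2, mem_numRangeOn_of_inner_eq hx hx0 (by field_simp)⟩

theorem norm_le_of_mem_numRangeOn {A : E →L[ℂ] E} {M : Submodule ℂ E} {z : ℂ}
    (hz : z ∈ numRangeOn A M) : ‖z‖ ≤ ‖A‖ := by
  obtain ⟨x, -, hx, rfl⟩ := hz
  calc ‖⟪x, A x⟫_ℂ‖ ≤ ‖x‖ * ‖A x‖ := norm_inner_le_norm _ _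
    _ ≤ ‖A‖ := by simpa [hx] using A.le_opNorm x

theorem mul_add_mem_numRangeOn {A : E →L[ℂ] E} {M : Submodule ℂ E} {z : ℂ}
    (hz : z ∈ numRangeOn A M) (c d : ℂ) : c * z + d ∈ numRangeOn (c • A + d • 1) M := by
  obtain ⟨x, hxM, hx, rfl⟩ := hz
  refine ⟨x, hxM, hx, ?_⟩
  simp [inner_self_eq_norm_sq_to_K, hx]

theorem exists_norm_eq_one_im_mul_add_conj_mul_eq_zero (p q : ℂ) :
    ∃ c : ℂ, ‖c‖ = 1 ∧ (c * p + conj c * q).im = 0 := by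
  obtain ⟨c, hc, hcpq⟩ := Complex.exists_norm_eq_mul_self (p - conj q)
  refine ⟨c, hc, ?_⟩
  calc (c * p + conj c * q).im = (c * (p - conj q)).im := by simp; ring
    _ = 0 := by rw [← hcpq, ofReal_im]

theorem linearIndependent_pair_of_inner_apply_eq_zero {T : E →L[ℂ] E} {x y : E} (hx : x ≠ 0)
    (hTx : ⟪x, T x⟫_ℂ = 0) (hTy : ⟪y, T y⟫_ℂ ≠ 0) : LinearIndependent ℂ ![x, y] := by
  rw [LinearIndependent.pair_iff]
  intro s t hst
  have hyx : t • y = -s • x := by rw [eq_neg_of_add_eq_zero_right hst, neg_smul]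
  have hform : ⟪t • y, T (t • y)⟫_ℂ = 0 := by
    rw [hyx, map_smul, inner_smul_left, inner_smul_right, hTx, mul_zero, mul_zero]
  have ht : t = 0 := by simpa [inner_smul_left, inner_smul_right, hTy] using hform
  exact ⟨by simpa [ht, hx] using hst, ht⟩

/-- The unit vectors realising `0` and `1` are joined, after a change of phase, by a path on which
the quadratic form of `T` is real, so the intermediate value theorem applies. -/
theorem ofReal_mem_numRangeOn {T : E →L[ℂ] E} {M : Submodule ℂ E} (h0 : 0 ∈ numRangeOn T M)
    (h1 : 1 ∈ numRangeOn T M) {t : ℝ} (ht : t ∈ Set.Icc (0 : ℝ) 1) :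
    (t : ℂ) ∈ numRangeOn T M := by
  obtain ⟨x, hxM, hx, hTx⟩ := h0
  obtain ⟨y, hyM, hy, hTy⟩ := h1
  obtain ⟨c, hc, him⟩ :=
    exists_norm_eq_one_im_mul_add_conj_mul_eq_zero ⟪y, T x⟫_ℂ ⟪x, T y⟫_ℂ
  let v : ℝ → E := fun s => (s : ℂ) • y + ((1 - s : ℝ) : ℂ) • c • x
  have hv : Continuous v := by fun_prop
  have hform (s : ℝ) : ⟪v s, T (v s)⟫_ℂ = ((s ^ 2 : ℝ) : ℂ) +
      ((s * (1 - s) : ℝ) : ℂ) * (c * ⟪y, T x⟫_ℂ + conj c * ⟪x, T y⟫_ℂ) := by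
    simp only [v, map_add, map_smul, inner_add_left, inner_add_right, inner_smul_left,
      inner_smul_right, hTx, hTy, conj_ofReal]
    push_cast
    ring
  have hreal (s : ℝ) : (⟪v s, T (v s)⟫_ℂ).im = 0 := by
    rw [hform, add_im, ofReal_im, im_ofReal_mul, him, mul_zero, add_zero]
  obtain ⟨s, -, hs⟩ : (0 : ℝ) ∈
      (fun s => (⟪v s, T (v s)⟫_ℂ).re - t * ‖v s‖ ^ 2) '' Set.Icc 0 1 := by
    refine intermediate_value_Icc zero_le_one ?_ ?_
    · exact ((continuous_re.comp (hv.inner (T.continuous.comp hv))).sub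
        (continuous_const.mul (hv.norm.pow 2))).continuousOn
    · simpa [v, -coe_smul, inner_smul_left, inner_smul_right, hTx, hTy, norm_smul, hc, hx, hy]
        using ht
  have hv0 : v s ≠ 0 := fun hvs => by
    have hx0 : x ≠ 0 := norm_ne_zero_iff.mp (by simp [hx])
    have hc0 : c ≠ 0 := norm_ne_zero_iff.mp (by simp [hc])
    have hind := linearIndependent_pair_of_inner_apply_eq_zero hx0 hTx (hTy ▸ one_ne_zero)
    obtain ⟨hs1, hs0⟩ := LinearIndependent.pair_iff.mp hind (((1 - s : ℝ) : ℂ) * c) s <| by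
      rw [mul_smul, add_comm]
      exact hvs
    simp [ofReal_eq_zero.mp hs0, hc0] at hs1
  refine mem_numRangeOn_of_inner_eq
    (M.add_mem (M.smul_mem _ hyM) (M.smul_mem _ (M.smul_mem _ hxM))) hv0 (Complex.ext ?_ ?_)
  · rw [sub_eq_zero.mp hs]
    norm_cast
  · rw [hreal]
    norm_cast

theorem convex_numRangeOn (A : E →L[ℂ] E) (M : Submodule ℂ E) : Convex ℝ (numRangeOn A M) := by
  rw [convex_iff_segment_subset]
  intro a ha b hb z hz
  rw [segment_eq_image_lineMap] at hz
  obtain ⟨t, ht, rfl⟩ := hz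
  obtain rfl | hab := eq_or_ne a b
  · simpa using ha
  have hba : b - a ≠ 0 := sub_ne_zero.mpr hab.symm
  set T : E →L[ℂ] E := (b - a)⁻¹ • A + (-((b - a)⁻¹ * a)) • 1 with hT
  have h0 : 0 ∈ numRangeOn T M := by
    convert mul_add_mem_numRangeOn ha (b - a)⁻¹ (-((b - a)⁻¹ * a)) using 1
    ring
  have h1 : 1 ∈ numRangeOn T M := by
    convert mul_add_mem_numRangeOn hb (b - a)⁻¹ (-((b - a)⁻¹ * a)) using 1
    field_simp
    ring
  have hA : (b - a) • T + a • 1 = A := by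
    rw [hT, smul_add, smul_inv_smul₀ hba, smul_smul, mul_neg, mul_inv_cancel_left₀ hba]
    module
  convert mul_add_mem_numRangeOn (ofReal_mem_numRangeOn h0 h1 ht) (b - a) a using 1
  · rw [hA]
  · simp [AffineMap.lineMap_apply, mul_comm]

/-- The inequality `(u * z).re < ‖A‖` is strict because equality would force
`numRangeOn A M = {z}`. -/
theorem exists_norm_eq_one_re_lt_of_notMem_numRangeOn {A : E →L[ℂ] E} {M : Submodule ℂ E}
    (hM : M ≠ ⊥) {z : ℂ} (hzA : ‖z‖ ≤ ‖A‖) (hz : z ∉ numRangeOn A M) :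
    ∃ u : ℂ, ‖u‖ = 1 ∧ (u * z).re < ‖A‖ ∧
      ∀ x ∈ M, (u * z).re * ‖x‖ ^ 2 ≤ (u * ⟪x, A x⟫_ℂ).re := by
  obtain ⟨u, hu, hsep⟩ :=
    exists_norm_eq_one_forall_re_mul_le (convex_numRangeOn A M) (numRangeOn_nonempty A hM) hz
  have eq_norm {w : ℂ} (hw : ‖w‖ ≤ ‖A‖) (hAw : ‖A‖ ≤ (u * w).re) : u * w = ‖A‖ := by
    have hnorm : ‖u * w‖ ≤ ‖A‖ := by simpa [hu] using hw
    have hre := RCLike.norm_le_re_iff_eq_norm.mp (hnorm.trans hAw)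
    rw [hre, hnorm.antisymm (hAw.trans (re_le_norm _))]
    rfl
  refine ⟨u, hu, ?_, fun x hx => ?_⟩
  · by_contra! hle
    obtain ⟨w, hw⟩ := numRangeOn_nonempty A hM
    have hu0 : u ≠ 0 := norm_ne_zero_iff.mp (by simp [hu])
    have hzw : z = w := mul_left_cancel₀ hu0
      ((eq_norm hzA hle).trans
        (eq_norm (norm_le_of_mem_numRangeOn hw) (hle.trans (hsep w hw))).symm)
    exact hz (hzw ▸ hw)
  · obtain rfl | hx0 := eq_or_ne x 0
    · simp
    have hnorm : (‖x‖ : ℂ) ≠ 0 := by simpa using hx0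
    have hw : ⟪x, A x⟫_ℂ = ⟪x, A x⟫_ℂ / ‖x‖ ^ 2 * ‖x‖ ^ 2 := by field_simp
    calc (u * z).re * ‖x‖ ^ 2
        ≤ (u * (⟪x, A x⟫_ℂ / ‖x‖ ^ 2)).re * ‖x‖ ^ 2 := by
          exact mul_le_mul_of_nonneg_right (hsep _ (mem_numRangeOn_of_inner_eq hx hx0 hw))
            (sq_nonneg _)
      _ = (u * ⟪x, A x⟫_ℂ).re := by
          conv_rhs => rw [hw, ← mul_assoc]
          rw [← ofReal_pow, re_mul_ofReal]

end NumericalRange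

theorem finiteDimensional_of_disjoint_orthogonal {𝕜 F : Type*} [RCLike 𝕜] [NormedAddCommGroup F]
    [InnerProductSpace 𝕜 F] {N V : Submodule 𝕜 F} [FiniteDimensional 𝕜 V] (h : Disjoint N Vᗮ) :
    FiniteDimensional 𝕜 N := by
  refine FiniteDimensional.of_injective
    ((V.orthogonalProjectionOnto : F →ₗ[𝕜] V).domRestrict N) (LinearMap.ker_eq_bot.mp ?_)
  rw [LinearMap.ker_domRestrict, V.ker_orthogonalProjectionOnto]
  exact Submodule.disjoint_iff_comap_eq_bot.mp h

theorem apply_eq_zero_of_re_inner_nonpos {T : H →L[ℂ] H} (hT : 0 ≤ T) {x : H}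
    (hx : (⟪x, T x⟫_ℂ).re ≤ 0) : T x = 0 := by
  obtain ⟨s, rfl⟩ := CStarAlgebra.nonneg_iff_eq_star_mul_self.mp hT
  have hform : ⟪x, (star s * s) x⟫_ℂ = (‖s x‖ : ℂ) ^ 2 := by
    rw [mul_apply_eq_comp, ContinuousLinearMap.star_eq_adjoint,
      ContinuousLinearMap.adjoint_inner_right, inner_self_eq_norm_sq_to_K]
    rfl
  have hsx : s x = 0 := by
    rw [hform, ← ofReal_pow, ofReal_re] at hx
    simpa using hx.antisymm (sq_nonneg _)
  rw [mul_apply_eq_comp, hsx, map_zero]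

theorem inner_posPart_sub_inner_negPart {T : H →L[ℂ] H} (hT : IsSelfAdjoint T) (x y : H) :
    ⟪x, T⁺ y⟫_ℂ - ⟪x, T⁻ y⟫_ℂ = ⟪x, T y⟫_ℂ := by
  conv_rhs => rw [← CFC.posPart_sub_negPart T hT]
  rw [sub_apply, inner_sub_right]

theorem posPart_apply_eq_zero_of_mem_orthogonal_ker_negPart (T : H →L[ℂ] H) {x : H}
    (hx : x ∈ (T⁻).toLinearMap.kerᗮ) : T⁺ x = 0 := by
  have hpos := (ContinuousLinearMap.nonneg_iff_isPositive _).mp (CFC.posPart_nonneg T)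
  have hker : T⁺ (T⁺ x) ∈ (T⁻).toLinearMap.ker := by
    rw [LinearMap.mem_ker, ContinuousLinearMap.coe_coe, ← mul_apply_eq_comp,
      CFC.negPart_mul_posPart, zero_apply]
  have horth : ⟪T⁺ (T⁺ x), x⟫_ℂ = 0 := hx _ hker
  rwa [hpos.inner_left_eq_inner_right, inner_self_eq_zero] at horth

theorem finiteDimensional_orthogonal_ker_negPart {T : H →L[ℂ] H} (hT : IsSelfAdjoint T)
    (V : Submodule ℂ H) [FiniteDimensional ℂ V] (hV : ∀ x ∈ Vᗮ, 0 ≤ (⟪x, T x⟫_ℂ).re) :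
    FiniteDimensional ℂ (T⁻).toLinearMap.kerᗮ := by
  refine finiteDimensional_of_disjoint_orthogonal (V := V) (Submodule.disjoint_def.mpr ?_)
  intro x hx hxV
  have hle : (⟪x, T⁻ x⟫_ℂ).re ≤ 0 := by
    have := hV x hxV
    rwa [← inner_posPart_sub_inner_negPart hT,
      posPart_apply_eq_zero_of_mem_orthogonal_ker_negPart T hx, inner_zero_right, zero_sub,
      neg_re, neg_nonneg] at this
  have hker : x ∈ (T⁻).toLinearMap.ker :=
    apply_eq_zero_of_re_inner_nonpos (CFC.negPart_nonneg T) hle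
  exact inner_self_eq_zero.mp (hx x hker)

theorem exists_re_inner_starProjection_le_of_isSelfAdjoint {T : H →L[ℂ] H} (hT : IsSelfAdjoint T)
    (V : Submodule ℂ H) [FiniteDimensional ℂ V] (hV : ∀ x ∈ Vᗮ, 0 ≤ (⟪x, T x⟫_ℂ).re) :
    ∃ N : Submodule ℂ H, ∃ _ : FiniteDimensional ℂ N, ∀ x,
      (⟪N.starProjection x, T (N.starProjection x)⟫_ℂ).re ≤ (⟪x, T x⟫_ℂ).re := by
  let K := (T⁻).toLinearMap.ker
  have : CompleteSpace K := (ContinuousLinearMap.isClosed_ker (T⁻)).completeSpace_coe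
  have hfd : FiniteDimensional ℂ Kᗮ := finiteDimensional_orthogonal_ker_negPart hT V hV
  have hneg := (ContinuousLinearMap.nonneg_iff_isPositive _).mp (CFC.negPart_nonneg T)
  have hpos := (ContinuousLinearMap.nonneg_iff_isPositive _).mp (CFC.posPart_nonneg T)
  refine ⟨Kᗮ, hfd, fun x => ?_⟩
  set n := Kᗮ.starProjection x
  have hnpos : T⁺ n = 0 := posPart_apply_eq_zero_of_mem_orthogonal_ker_negPart T
    (Kᗮ.starProjection_apply_mem x)
  have hnneg : T⁻ n = T⁻ x := by
    have hxn : x - n ∈ K := by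
      have := Kᗮ.sub_starProjection_mem_orthogonal x
      rwa [K.orthogonal_orthogonal] at this
    exact (sub_eq_zero.mp ((map_sub (T⁻) x n).symm.trans hxn)).symm
  have hinner : ⟪n, T⁻ n⟫_ℂ = ⟪x, T⁻ x⟫_ℂ := by
    rw [← hneg.inner_left_eq_inner_right, hnneg, hneg.inner_left_eq_inner_right, hnneg]
  rw [← inner_posPart_sub_inner_negPart hT, ← inner_posPart_sub_inner_negPart hT, hnpos, hinner,
    inner_zero_right, sub_re, sub_re]
  exact sub_le_sub_right (hpos.re_inner_nonneg_right x) _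

theorem isSelfAdjoint_reOp (T : H →L[ℂ] H) : IsSelfAdjoint (reOp T) := by
  have h2 : IsSelfAdjoint (2⁻¹ : ℂ) := by simp [IsSelfAdjoint]
  exact h2.smul (IsSelfAdjoint.add_star_self T)

theorem re_inner_reOp (T : H →L[ℂ] H) (x : H) : (⟪x, reOp T x⟫_ℂ).re = (⟪x, T x⟫_ℂ).re := by
  have h : ⟪x, reOp T x⟫_ℂ = 2⁻¹ * (⟪x, T x⟫_ℂ + conj ⟪x, T x⟫_ℂ) := by
    rw [reOp, smul_apply, add_apply, inner_smul_right, inner_add_right,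
      ContinuousLinearMap.adjoint_inner_right, inner_conj_symm]
  rw [h, add_conj, ← ofReal_ofNat 2]
  simp

theorem exists_re_inner_starProjection_le {T : H →L[ℂ] H}
    (V : Submodule ℂ H) [FiniteDimensional ℂ V] (hV : ∀ x ∈ Vᗮ, 0 ≤ (⟪x, T x⟫_ℂ).re) :
    ∃ N : Submodule ℂ H, ∃ _ : FiniteDimensional ℂ N, ∀ x,
      (⟪N.starProjection x, T (N.starProjection x)⟫_ℂ).re ≤ (⟪x, T x⟫_ℂ).re := by
  simp only [← re_inner_reOp T] at hV ⊢
  exact exists_re_inner_starProjection_le_of_isSelfAdjoint (isSelfAdjoint_reOp T) V hV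

section Perturbation

theorem inner_starProjection_self {𝕜 F : Type*} [RCLike 𝕜] [NormedAddCommGroup F]
    [InnerProductSpace 𝕜 F] (U : Submodule 𝕜 F) [U.HasOrthogonalProjection] (x : F) :
    ⟪x, U.starProjection x⟫_𝕜 = (‖U.starProjection x‖ : 𝕜) ^ 2 := by
  rw [← inner_self_eq_norm_sq_to_K, U.inner_starProjection_left_eq_right,
    Submodule.starProjection_eq_self_iff.mpr (U.starProjection_apply_mem x)]

theorem orthogonal_ne_bot_of_not_finiteDimensional {𝕜 F : Type*} [RCLike 𝕜] [NormedAddCommGroup F]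
    [InnerProductSpace 𝕜 F] (hF : ¬ FiniteDimensional 𝕜 F) (V : Submodule 𝕜 F)
    [FiniteDimensional 𝕜 V] : Vᗮ ≠ ⊥ := fun h => hF <| by
  rw [Submodule.orthogonal_eq_bot_iff] at h
  subst h
  exact Module.Finite.equiv (Submodule.topEquiv (R := 𝕜) (M := F))

variable {E : Type*} [NormedAddCommGroup E] [InnerProductSpace ℂ E]

theorem re_inner_smul_sub_smul_one (A : E →L[ℂ] E) (u lam : ℂ) (x : E) :
    (⟪x, (u • (A - lam • 1)) x⟫_ℂ).re = (u * ⟪x, A x⟫_ℂ).re - (u * lam).re * ‖x‖ ^ 2 := by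
  have h : ⟪x, (u • (A - lam • 1)) x⟫_ℂ = u * ⟪x, A x⟫_ℂ - u * lam * ((‖x‖ ^ 2 : ℝ) : ℂ) := by
    simp only [smul_apply, sub_apply, one_apply_eq_self, inner_smul_right, inner_sub_right,
      inner_self_eq_norm_sq_to_K, coe_algebraMap, ofReal_pow]
    ring
  rw [h, sub_re, re_mul_ofReal]

theorem re_mul_inner_of_inner_add_smul_starProjection_eq {A : E →L[ℂ] E} {u lam : ℂ}
    (hu : ‖u‖ = 1) {t : ℝ} {Q : Submodule ℂ E} [Q.HasOrthogonalProjection] {x : E}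
    (hx : ⟪x, (A + (2 * conj u * (t : ℂ)) • Q.starProjection) x⟫_ℂ = lam) :
    (u * ⟪x, A x⟫_ℂ).re = (u * lam).re - 2 * t * ‖Q.starProjection x‖ ^ 2 := by
  have huu : u * conj u = 1 := by rw [mul_conj, normSq_eq_norm_sq, hu]; simp
  have h : u * ⟪x, A x⟫_ℂ = u * lam - ((2 * t * ‖Q.starProjection x‖ ^ 2 : ℝ) : ℂ) := by
    rw [← hx, add_apply, smul_apply, inner_add_right, inner_smul_right, inner_starProjection_self]
    push_cast
    linear_combination -2 * (t : ℂ) * (‖Q.starProjection x‖ : ℂ) ^ 2 * huu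
  rw [h, sub_re, ofReal_re]

theorem neg_norm_mul_sq_le_re_mul_inner (A : E →L[ℂ] E) {u : ℂ} (hu : ‖u‖ = 1) (x : E) :
    -(‖A‖ * ‖x‖ ^ 2) ≤ (u * ⟪x, A x⟫_ℂ).re := by
  refine neg_le_of_abs_le ((abs_re_le_norm _).trans ?_)
  calc ‖u * ⟪x, A x⟫_ℂ‖ = ‖⟪x, A x⟫_ℂ‖ := by rw [norm_mul, hu, one_mul]
    _ ≤ ‖x‖ * (‖A‖ * ‖x‖) := (norm_inner_le_norm _ _).trans (by gcongr; exact A.le_opNorm x)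
    _ = ‖A‖ * ‖x‖ ^ 2 := by ring

/-- With `n` the projection of `x` to `N` and `r = Re (u * lam)`, the hypotheses chain to
`-(‖A‖ + r) * ‖n‖ ^ 2 ≤ -2 * ‖A‖ * ‖Q x‖ ^ 2`, while `‖n‖ ≤ ‖Q x‖` and `r < ‖A‖`. -/
theorem starProjection_eq_zero_of_inner_add_smul_eq {A : E →L[ℂ] E} {u lam : ℂ}
    (hu : ‖u‖ = 1) (hle : -‖A‖ ≤ (u * lam).re) (hlt : (u * lam).re < ‖A‖) {N Q : Submodule ℂ E}
    [N.HasOrthogonalProjection] [Q.HasOrthogonalProjection] (hNQ : N ≤ Q) {x : E} (hx : ‖x‖ = 1)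
    (hN : (⟪N.starProjection x, (u • (A - lam • 1)) (N.starProjection x)⟫_ℂ).re ≤
      (⟪x, (u • (A - lam • 1)) x⟫_ℂ).re)
    (hxlam : ⟪x, (A + (2 * conj u * (‖A‖ : ℂ)) • Q.starProjection) x⟫_ℂ = lam) :
    Q.starProjection x = 0 := by
  have hnorm : ‖N.starProjection x‖ ≤ ‖Q.starProjection x‖ := by
    rw [← N.starProjection_comp_starProjection_of_le hNQ]
    exact N.norm_starProjection_apply_le _
  set n := N.starProjection x
  set q := Q.starProjection x with hq
  have hform : -((‖A‖ + (u * lam).re) * ‖n‖ ^ 2) ≤ -(2 * ‖A‖ * ‖q‖ ^ 2) := by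
    rw [re_inner_smul_sub_smul_one, re_inner_smul_sub_smul_one,
      re_mul_inner_of_inner_add_smul_starProjection_eq hu hxlam, hx, ← hq] at hN
    linarith [neg_norm_mul_sq_le_re_mul_inner A hu n]
  have hnq : (‖A‖ + (u * lam).re) * ‖n‖ ^ 2 ≤ (‖A‖ + (u * lam).re) * ‖q‖ ^ 2 := by
    have := neg_le_iff_add_nonneg'.mp hle
    gcongr
  have hsq : (‖A‖ - (u * lam).re) * ‖q‖ ^ 2 ≤ 0 := by linarith
  simpa using (nonpos_of_mul_nonpos_right hsq (sub_pos.mpr hlt)).antisymm (sq_nonneg _)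

theorem mem_numRangeOn_orthogonal_of_forall_mem_numRange_add (hH : ¬ FiniteDimensional ℂ H)
    {A : H →L[ℂ] H} {lam : ℂ}
    (hlam : ∀ u : ℂ, ‖u‖ = 1 → ∀ N : Submodule ℂ H, ∀ _ : FiniteDimensional ℂ N,
      lam ∈ numRange (A + (2 * u * (‖A‖ : ℂ)) • N.starProjection))
    (V : Submodule ℂ H) [FiniteDimensional ℂ V] : lam ∈ numRangeOn A Vᗮ := by
  have hnorm : ‖lam‖ ≤ ‖A‖ := by
    have hA := hlam 1 norm_one ⊥ inferInstance
    rw [← numRangeOn_top] at hA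
    simpa using norm_le_of_mem_numRangeOn hA
  by_contra hmem
  obtain ⟨u, hu, hlt, hsep⟩ := exists_norm_eq_one_re_lt_of_notMem_numRangeOn
    (orthogonal_ne_bot_of_not_finiteDimensional hH V) hnorm hmem
  have hle : -‖A‖ ≤ (u * lam).re :=
    neg_le_of_abs_le ((abs_re_le_norm _).trans (by rwa [norm_mul, hu, one_mul]))
  obtain ⟨N, _, hN⟩ := exists_re_inner_starProjection_le
    (T := u • (A - lam • 1)) V fun x hx => by
      rw [re_inner_smul_sub_smul_one, sub_nonneg]
      exact hsep x hx
  obtain ⟨x, hx, hxlam⟩ := hlam (conj u) (by simpa using hu) (N ⊔ V) inferInstance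
  have hQx := starProjection_eq_zero_of_inner_add_smul_eq hu hle hlt le_sup_left hx (hN x) hxlam
  have hxQ : x ∈ (N ⊔ V)ᗮ := (Submodule.starProjection_apply_eq_zero_iff _).mp hQx
  refine hmem ⟨x, Submodule.orthogonal_le le_sup_right hxQ, hx, ?_⟩
  rwa [add_apply, smul_apply, hQx, smul_zero, add_zero] at hxlam

end Perturbation

section ScalarCompression

variable {E : Type*} [NormedAddCommGroup E] [InnerProductSpace ℂ E]

/-- The compression of `A` to the subspace `U` is the scalar `lam`, expressed through the
sesquilinear form so that `U` need not be closed. -/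
def HasScalarCompression (A : E →L[ℂ] E) (lam : ℂ) (U : Submodule ℂ E) : Prop :=
  ∀ x ∈ U, ∀ y ∈ U, ⟪x, A y⟫_ℂ = lam * ⟪x, y⟫_ℂ

variable {A : E →L[ℂ] E} {lam : ℂ} {U V : Submodule ℂ E}

theorem HasScalarCompression.mono (hV : HasScalarCompression A lam V) (hUV : U ≤ V) :
    HasScalarCompression A lam U :=
  fun x hx y hy => hV x (hUV hx) y (hUV hy)

theorem hasScalarCompression_iff_isOrtho :
    HasScalarCompression A lam U ↔ U ⟂ U.map (A - lam • 1).toLinearMap := by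
  simp [HasScalarCompression, Submodule.isOrtho_iff_inner_eq, inner_sub_right, inner_smul_right,
    sub_eq_zero]

theorem hasScalarCompression_span {s : Set E}
    (hs : ∀ x ∈ s, ∀ y ∈ s, ⟪x, A y⟫_ℂ = lam * ⟪x, y⟫_ℂ) :
    HasScalarCompression A lam (Submodule.span ℂ s) := by
  rw [hasScalarCompression_iff_isOrtho, Submodule.map_span, Submodule.isOrtho_span]
  rintro x hx _ ⟨y, hy, rfl⟩
  simp [inner_sub_right, inner_smul_right, hs x hx y hy]

theorem HasScalarCompression.topologicalClosure (hU : HasScalarCompression A lam U) :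
    HasScalarCompression A lam U.topologicalClosure := by
  rw [hasScalarCompression_iff_isOrtho] at hU ⊢
  have hmap : U.topologicalClosure.map (A - lam • 1).toLinearMap ≤
      (U.map (A - lam • 1).toLinearMap).topologicalClosure :=
    U.topologicalClosure_map (A - lam • 1)
  refine Submodule.IsOrtho.mono_right hmap ?_
  rw [Submodule.IsOrtho, Submodule.orthogonal_closure]
  exact Submodule.topologicalClosure_minimal _ hU (Submodule.isClosed_orthogonal _)

theorem hasScalarCompression_iff_starProjection [U.HasOrthogonalProjection] :
    HasScalarCompression A lam U ↔
      U.starProjection ∘L A ∘L U.starProjection = lam • U.starProjection := by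
  have proj_eq {x : E} (hx : x ∈ U) : U.starProjection x = x :=
    Submodule.starProjection_eq_self_iff.mpr hx
  constructor
  · refine fun hU => ContinuousLinearMap.ext fun y => ext_inner_left ℂ fun x => ?_
    have hx := U.starProjection_apply_mem x
    have hy := U.starProjection_apply_mem y
    calc ⟪x, U.starProjection (A (U.starProjection y))⟫_ℂ
        = ⟪U.starProjection x, A (U.starProjection y)⟫_ℂ :=
          (U.inner_starProjection_left_eq_right _ _).symm
      _ = lam * ⟪U.starProjection x, U.starProjection y⟫_ℂ := hU _ hx _ hy
      _ = ⟪x, lam • U.starProjection y⟫_ℂ := by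
          rw [U.inner_starProjection_left_eq_right, proj_eq hy, inner_smul_right]
  · intro hcomp x hx y hy
    calc ⟪x, A y⟫_ℂ = ⟪U.starProjection x, A (U.starProjection y)⟫_ℂ := by
          rw [proj_eq hx, proj_eq hy]
      _ = ⟪x, (U.starProjection ∘L A ∘L U.starProjection) y⟫_ℂ :=
          U.inner_starProjection_left_eq_right _ _
      _ = lam * ⟪x, y⟫_ℂ := by rw [hcomp, smul_apply, proj_eq hy, inner_smul_right]

theorem opRank_starProjection (U : Submodule ℂ E) [U.HasOrthogonalProjection] :
    opRank U.starProjection = Module.rank ℂ U := by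
  rw [opRank, Submodule.range_starProjection]

end ScalarCompression

theorem isOrthProj_iff_exists_starProjection {P : H →L[ℂ] H} :
    IsOrthProj P ↔ ∃ U : Submodule ℂ H, ∃ _ : U.HasOrthogonalProjection, P = U.starProjection := by
  rw [← isStarProjection_iff_eq_starProjection, isStarProjection_iff]
  exact and_comm

theorem isOrthProj_starProjection (U : Submodule ℂ H) [U.HasOrthogonalProjection] :
    IsOrthProj U.starProjection :=
  isOrthProj_iff_exists_starProjection.mpr ⟨U, inferInstance, rfl⟩

theorem mem_rankKRange_iff_s17 {k : ℕ} {A : H →L[ℂ] H} {lam : ℂ} :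
    lam ∈ rankKRange k A ↔
      ∃ U : Submodule ℂ H, Module.rank ℂ U = k ∧ HasScalarCompression A lam U := by
  constructor
  · rintro ⟨P, hP, hrank, hcomp⟩
    obtain ⟨U, _, rfl⟩ := isOrthProj_iff_exists_starProjection.mp hP
    exact ⟨U, opRank_starProjection U ▸ hrank, hasScalarCompression_iff_starProjection.mpr hcomp⟩
  · rintro ⟨U, hrank, hcomp⟩
    have : FiniteDimensional ℂ U := Module.finite_of_rank_eq_nat hrank
    exact ⟨U.starProjection, isOrthProj_starProjection U, (opRank_starProjection U).trans hrank,
      hasScalarCompression_iff_starProjection.mp hcomp⟩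

theorem mem_rankInfRange_iff {A : H →L[ℂ] H} {lam : ℂ} :
    lam ∈ rankInfRange A ↔
      ∃ U : Submodule ℂ H, Cardinal.aleph0 ≤ Module.rank ℂ U ∧ HasScalarCompression A lam U := by
  constructor
  · rintro ⟨P, hP, hrank, hcomp⟩
    obtain ⟨U, _, rfl⟩ := isOrthProj_iff_exists_starProjection.mp hP
    exact ⟨U, opRank_starProjection U ▸ hrank, hasScalarCompression_iff_starProjection.mpr hcomp⟩
  · rintro ⟨U, hrank, hcomp⟩
    have : CompleteSpace U.topologicalClosure :=
      U.isClosed_topologicalClosure.completeSpace_coe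
    refine ⟨U.topologicalClosure.starProjection, isOrthProj_starProjection _, ?_,
      hasScalarCompression_iff_starProjection.mp hcomp.topologicalClosure⟩
    rw [opRank_starProjection]
    exact hrank.trans (Submodule.rank_mono U.le_topologicalClosure)

theorem exists_le_rank_eq_natCast {K V : Type*} [DivisionRing K] [AddCommGroup V] [Module K V]
    {U : Submodule K V} {k : ℕ} (h : k ≤ Module.rank K U) :
    ∃ W ≤ U, Module.rank K W = k := by
  obtain ⟨v, hv⟩ := Module.le_rank_iff.mp h
  have hv' : LinearIndependent K (U.subtype ∘ v) := hv.map' U.subtype U.ker_subtype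
  refine ⟨Submodule.span K (Set.range (U.subtype ∘ v)), ?_, ?_⟩
  · rw [Submodule.span_le]
    rintro _ ⟨i, rfl⟩
    exact (v i).2
  · rw [rank_eq_card_basis (Module.Basis.span hv'), Fintype.card_fin]

theorem rankInfRange_subset_rankKRange (A : H →L[ℂ] H) (k : ℕ) :
    rankInfRange A ⊆ rankKRange k A := by
  intro lam hlam
  obtain ⟨U, hrank, hU⟩ := mem_rankInfRange_iff.mp hlam
  obtain ⟨V, hVU, hV⟩ := exists_le_rank_eq_natCast (Cardinal.natCast_le_aleph0.trans hrank)
  exact mem_rankKRange_iff_s17.mpr ⟨V, hV, hU.mono hVU⟩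

theorem exists_mem_ne_zero_apply_eq_zero_of_opRank_lt {E : Type*} [NormedAddCommGroup E]
    [InnerProductSpace ℂ E] {F : E →L[ℂ] E} {U : Submodule ℂ E}
    (h : opRank F < Module.rank ℂ U) : ∃ x ∈ U, x ≠ 0 ∧ F x = 0 := by
  by_contra! hinj
  have hF : Function.Injective ((F : E →ₗ[ℂ] E).rangeRestrict ∘ₗ U.subtype) := by
    refine (injective_iff_map_eq_zero _).mpr fun x hx => ?_
    by_contra hx0
    exact hinj x x.2 (Submodule.coe_eq_zero.not.mpr hx0) (congrArg Subtype.val hx)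
  exact h.not_ge (LinearMap.rank_le_of_injective _ hF)

theorem iInter_rankKRange_subset_numRange_add {A F : H →L[ℂ] H} (hF : opRank F < Cardinal.aleph0) :
    ⋂ (k : ℕ) (_ : 1 ≤ k), rankKRange k A ⊆ numRange (A + F) := by
  intro lam hlam
  obtain ⟨r, hr⟩ := Cardinal.lt_aleph0.mp hF
  obtain ⟨U, hrank, hU⟩ :=
    mem_rankKRange_iff_s17.mp (Set.mem_iInter₂.mp hlam (r + 1) (Nat.le_add_left 1 r))
  have hlt : opRank F < Module.rank ℂ U := by
    rw [hr, hrank]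
    exact_mod_cast r.lt_succ_self
  obtain ⟨x, hx, hx0, hFx⟩ := exists_mem_ne_zero_apply_eq_zero_of_opRank_lt hlt
  rw [← numRangeOn_top]
  refine mem_numRangeOn_of_inner_eq Submodule.mem_top hx0 ?_
  rw [add_apply, hFx, add_zero, hU x hx x hx, inner_self_eq_norm_sq_to_K]
  rfl

theorem exists_orthonormal_forall_inner_eq {A : H →L[ℂ] H} {lam : ℂ}
    (h : ∀ (V : Submodule ℂ H) [FiniteDimensional ℂ V], lam ∈ numRangeOn A Vᗮ) :
    ∃ f : ℕ → H, Orthonormal ℂ f ∧ ∀ m n, ⟪f m, A (f n)⟫_ℂ = lam * ⟪f m, f n⟫_ℂ := by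
  classical
  obtain ⟨f, hf, hfr⟩ := exists_seq_of_forall_finset_exists
    (fun x : H => ‖x‖ = 1 ∧ ⟪x, A x⟫_ℂ = lam)
    (fun x y : H => ⟪x, y⟫_ℂ = 0 ∧ ⟪x, A y⟫_ℂ = 0 ∧ ⟪A x, y⟫_ℂ = 0) fun s _ => by
      obtain ⟨y, hy, hy1, hyA⟩ := h (Submodule.span ℂ
        (s ∪ s.image A ∪ s.image (ContinuousLinearMap.adjoint A) : Finset H))
      have horth (z) (hz : z ∈ s ∪ s.image A ∪ s.image (ContinuousLinearMap.adjoint A)) :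
          ⟪z, y⟫_ℂ = 0 := hy z (Submodule.subset_span hz)
      refine ⟨y, ⟨hy1, hyA⟩, fun x hx => ⟨horth x (by simp [hx]), ?_, horth (A x) ?_⟩⟩
      · rw [← ContinuousLinearMap.adjoint_inner_left]
        exact horth _ (Finset.mem_union_right _ (Finset.mem_image_of_mem _ hx))
      · exact Finset.mem_union_left _ (Finset.mem_union_right _ (Finset.mem_image_of_mem _ hx))
  have horthonormal : Orthonormal ℂ f := by
    refine ⟨fun n => (hf n).1, fun m n hmn => ?_⟩
    rcases hmn.lt_or_gt with hlt | hlt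
    · exact (hfr m n hlt).1
    · exact inner_eq_zero_symm.mp (hfr n m hlt).1
  refine ⟨f, horthonormal, fun m n => ?_⟩
  rcases lt_trichotomy m n with hlt | rfl | hlt
  · rw [(hfr m n hlt).1, (hfr m n hlt).2.1, mul_zero]
  · simp [hf m, inner_self_eq_norm_sq_to_K]
  · rw [inner_eq_zero_symm.mp (hfr n m hlt).2.2, horthonormal.2 hlt.ne', mul_zero]

theorem mem_rankInfRange_of_forall_mem_numRangeOn_orthogonal {A : H →L[ℂ] H} {lam : ℂ}
    (h : ∀ (V : Submodule ℂ H) [FiniteDimensional ℂ V], lam ∈ numRangeOn A Vᗮ) :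
    lam ∈ rankInfRange A := by
  obtain ⟨f, hf, hA⟩ := exists_orthonormal_forall_inner_eq h
  refine mem_rankInfRange_iff.mpr ⟨Submodule.span ℂ (Set.range f), ?_, hasScalarCompression_span ?_⟩
  · rw [rank_span hf.linearIndependent, Cardinal.aleph0_le_mk_iff, Set.infinite_coe_iff]
    exact Set.infinite_range_of_injective hf.linearIndependent.injective
  · rintro _ ⟨m, rfl⟩ _ ⟨n, rfl⟩
    exact hA m n

theorem exists_mem_Ico_exp_mul_I_eq {u : ℂ} (hu : ‖u‖ = 1) :
    ∃ ξ ∈ Set.Ico (0 : ℝ) (2 * Real.pi), exp (ξ * I) = u := by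
  obtain ⟨θ, rfl⟩ := (norm_eq_one_iff u).mp hu
  have hper : Function.Periodic (fun ξ : ℝ => exp (ξ * I)) (2 * Real.pi) := fun ξ => by
    simpa using exp_mul_I_periodic ξ
  obtain ⟨ξ, hξ, heq⟩ := hper.exists_mem_Ico₀ Real.two_pi_pos θ
  exact ⟨ξ, hξ, heq.symm⟩

/-- For `A` on an infinite-dimensional Hilbert space and any collection `𝒮` of
finite-rank operators containing all operators `2e^{iξ}‖A‖P` with `P` a finite-rank
orthogonal projection and `ξ ∈ [0,2π)`:
`Λ_∞(A) = ⋂_{k ≥ 1} Λ_k(A) = ⋂_{F ∈ 𝒮} W(A+F)`. -/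
theorem rankInfRange_eq_iInter
    (hH : ¬ FiniteDimensional ℂ H) (A : H →L[ℂ] H)
    (S : Set (H →L[ℂ] H))
    (hSrank : ∀ F ∈ S, opRank F < Cardinal.aleph0)
    (hS0 : ∀ ξ ∈ Set.Ico (0 : ℝ) (2 * Real.pi), ∀ P : H →L[ℂ] H,
      IsOrthProj P → opRank P < Cardinal.aleph0 →
      ((2 * Complex.exp (ξ * Complex.I) * (‖A‖ : ℂ)) • P) ∈ S) :
    (rankInfRange A = ⋂ (k : ℕ) (_ : 1 ≤ k), rankKRange k A) ∧
    rankInfRange A = ⋂ F ∈ S, numRange (A + F) := by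
  have hinf_k : rankInfRange A ⊆ ⋂ (k : ℕ) (_ : 1 ≤ k), rankKRange k A :=
    Set.subset_iInter₂ fun k _ => rankInfRange_subset_rankKRange A k
  have hk_S : ⋂ (k : ℕ) (_ : 1 ≤ k), rankKRange k A ⊆ ⋂ F ∈ S, numRange (A + F) :=
    Set.subset_iInter₂ fun F hF => iInter_rankKRange_subset_numRange_add (hSrank F hF)
  have hS_inf : ⋂ F ∈ S, numRange (A + F) ⊆ rankInfRange A := fun lam hlam => by
    refine mem_rankInfRange_of_forall_mem_numRangeOn_orthogonal fun V _ =>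
      mem_numRangeOn_orthogonal_of_forall_mem_numRange_add hH (fun u hu N _ => ?_) V
    obtain ⟨ξ, hξ, rfl⟩ := exists_mem_Ico_exp_mul_I_eq hu
    refine Set.mem_iInter₂.mp hlam _ (hS0 ξ hξ _ (isOrthProj_starProjection N) ?_)
    rw [opRank_starProjection]
    exact Module.rank_lt_aleph0 ℂ N
  exact ⟨hinf_k.antisymm (hk_S.trans hS_inf), (hinf_k.trans hk_S).antisymm hS_inf⟩
end
end
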